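/- arXiv:1211.6080 — 3 statements merged into one kernel-verified Lean document; each statement's English description precedes it below -/
import Mathlib

section
/- Let X be a real Hilbert space, I ⊆ ℝ an interval, A : I → 𝓛(X,X) continuous, and x : I → X a solution of the linear differential equation ẋ = A(t)x. Then for all t, t₀ ∈ I with t ≥ t₀, ‖x(t₀)‖·exp(∫_{t₀}^{t} μ₋(A(τ)) dτ) ≤ ‖x(t)‖ ≤ ‖x(t₀)‖·exp(∫_{t₀}^{t} μ₊(A(τ)) dτ) (Ważewski's inequality). -/
open RealInnerProductSpace intervalIntegral

/-- `μ₋(A) = inf {⟨Ax,x⟩ : ‖x‖ = 1}`. -/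
noncomputable def muMinus {X : Type*} [NormedAddCommGroup X] [InnerProductSpace ℝ X]
    (A : X →L[ℝ] X) : ℝ :=
  sInf {c : ℝ | ∃ y : X, ‖y‖ = 1 ∧ c = ⟪A y, y⟫}

/-- `μ₊(A) = sup {⟨Ax,x⟩ : ‖x‖ = 1}`. -/
noncomputable def muPlus {X : Type*} [NormedAddCommGroup X] [InnerProductSpace ℝ X]
    (A : X →L[ℝ] X) : ℝ :=
  sSup {c : ℝ | ∃ y : X, ‖y‖ = 1 ∧ c = ⟪A y, y⟫}

theorem waz_inner_bound {X : Type*} [NormedAddCommGroup X] [InnerProductSpace ℝ X]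
    (A : X →L[ℝ] X) (y : X) (hy : ‖y‖ = 1) : |⟪A y, y⟫| ≤ ‖A‖ := by
  have h1 := abs_real_inner_le_norm (A y) y
  have h2 := A.le_opNorm y
  rw [hy] at h1 h2
  linarith

theorem waz_le_muPlus {X : Type*} [NormedAddCommGroup X] [InnerProductSpace ℝ X]
    (A : X →L[ℝ] X) (y : X) (hy : ‖y‖ = 1) : ⟪A y, y⟫ ≤ muPlus A := by
  apply le_csSup
  · refine ⟨‖A‖, ?_⟩
    rintro c ⟨z, hz, rfl⟩
    exact (abs_le.1 (waz_inner_bound A z hz)).2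
  · exact ⟨y, hy, rfl⟩

theorem waz_muMinus {X : Type*} [NormedAddCommGroup X] [InnerProductSpace ℝ X]
    (A : X →L[ℝ] X) : muMinus A = - muPlus (-A) := by
  unfold muMinus muPlus
  rw [Real.sInf_def]
  congr 2
  ext c
  simp only [Set.mem_neg, Set.mem_ofPred_eq, neg_apply, inner_neg_left]
  constructor
  · rintro ⟨y, hy, h⟩
    exact ⟨y, hy, by linarith⟩
  · rintro ⟨y, hy, h⟩
    exact ⟨y, hy, by linarith⟩

theorem waz_inner_le {X : Type*} [NormedAddCommGroup X] [InnerProductSpace ℝ X]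
    (A : X →L[ℝ] X) (y : X) : ⟪A y, y⟫ ≤ muPlus A * ‖y‖ ^ 2 := by
  by_cases hy : y = 0
  · simp [hy]
  have hn : 0 < ‖y‖ := norm_pos_iff.2 hy
  have h := waz_le_muPlus A (‖y‖⁻¹ • y) (by rw [norm_smul]; simp [hn.ne'])
  rw [map_smul, real_inner_smul_left, real_inner_smul_right] at h
  have h2 := mul_le_mul_of_nonneg_right h (sq_nonneg ‖y‖)
  have h3 : ‖y‖⁻¹ * (‖y‖⁻¹ * ⟪A y, y⟫) * ‖y‖ ^ 2 = ⟪A y, y⟫ := by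
    field_simp
  linarith

theorem waz_le_inner {X : Type*} [NormedAddCommGroup X] [InnerProductSpace ℝ X]
    (A : X →L[ℝ] X) (y : X) : muMinus A * ‖y‖ ^ 2 ≤ ⟪A y, y⟫ := by
  have h := waz_inner_le (-A) y
  rw [neg_apply, inner_neg_left] at h
  rw [waz_muMinus]
  linarith

theorem waz_muPlus_sub {X : Type*} [NormedAddCommGroup X] [InnerProductSpace ℝ X]
    (A B : X →L[ℝ] X) : muPlus A ≤ muPlus B + ‖A - B‖ := by
  by_cases hne : ∃ y : X, ‖y‖ = 1
  · obtain ⟨y, hy⟩ := hne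
    refine csSup_le (s := {c : ℝ | ∃ y : X, ‖y‖ = 1 ∧ c = ⟪A y, y⟫}) ⟨_, y, hy, rfl⟩ ?_
    rintro c ⟨z, hz, rfl⟩
    have h1 := waz_le_muPlus B z hz
    have h2 := (abs_le.1 (waz_inner_bound (A - B) z hz)).2
    rw [sub_apply, inner_sub_left] at h2
    linarith
  · have h : ∀ C : X →L[ℝ] X, muPlus C = 0 := by
      intro C
      have : {c : ℝ | ∃ y : X, ‖y‖ = 1 ∧ c = ⟪C y, y⟫} = ∅ := by
        ext c
        simp only [Set.mem_ofPred_eq, Set.mem_empty_iff_false, iff_false]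
        rintro ⟨y, hy, -⟩
        exact hne ⟨y, hy⟩
      unfold muPlus
      rw [this, Real.sSup_empty]
    rw [h, h]
    simp

theorem waz_muPlus_cont {X : Type*} [NormedAddCommGroup X] [InnerProductSpace ℝ X] :
    Continuous (muPlus : (X →L[ℝ] X) → ℝ) := by
  have : LipschitzWith 1 (muPlus : (X →L[ℝ] X) → ℝ) := by
    apply LipschitzWith.of_le_add
    intro A B
    rw [dist_eq_norm]
    exact waz_muPlus_sub A B
  exact this.continuous

theorem waz_muMinus_cont {X : Type*} [NormedAddCommGroup X] [InnerProductSpace ℝ X] :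
    Continuous (muMinus : (X →L[ℝ] X) → ℝ) := by
  have : (muMinus : (X →L[ℝ] X) → ℝ) = fun A => - muPlus (-A) := funext waz_muMinus
  rw [this]
  exact (waz_muPlus_cont.comp continuous_neg).neg

theorem waz_gronwall (a b : ℝ) (hab : a ≤ b) (m g g' : ℝ → ℝ) (hm : ContinuousOn m (Set.Icc a b))
    (hg : ∀ s ∈ Set.Icc a b, HasDerivWithinAt g (g' s) (Set.Icc a b) s)
    (hle : ∀ s ∈ Set.Icc a b, g' s ≤ 2 * m s * g s) :
    g b ≤ g a * Real.exp (∫ τ in a..b, m τ) ^ 2 := by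
  set M : ℝ → ℝ := Set.IccExtend hab ((Set.Icc a b).domRestrict m) with hM
  have hMc : Continuous M := (continuousOn_iff_continuous_domRestrict.1 hm).Icc_extend'
  have hMe : ∀ s ∈ Set.Icc a b, M s = m s := by
    intro s hs
    rw [hM, Set.IccExtend_of_mem _ _ hs]; rfl
  have hint : (∫ τ in a..b, m τ) = ∫ τ in a..b, M τ := by
    apply intervalIntegral.integral_congr
    intro s hs
    rw [Set.uIcc_of_le hab] at hs
    exact (hMe s hs).symm
  have hF : ∀ s, HasDerivAt (fun s => ∫ τ in a..s, M τ) (M s) s := fun s =>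
    hMc.integral_hasStrictDerivAt a s |>.hasDerivAt
  have hE : ∀ s, HasDerivAt (fun s => Real.exp (-2 * ∫ τ in a..s, M τ))
      (Real.exp (-2 * ∫ τ in a..s, M τ) * (-2 * M s)) s := fun s =>
    ((hF s).const_mul (-2)).exp
  have hH : ∀ s ∈ Set.Icc a b, HasDerivWithinAt (fun s => g s * Real.exp (-2 * ∫ τ in a..s, M τ))
      (g' s * Real.exp (-2 * ∫ τ in a..s, M τ) +
        g s * (Real.exp (-2 * ∫ τ in a..s, M τ) * (-2 * M s))) (Set.Icc a b) s := fun s hs =>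
    (hg s hs).mul (hE s).hasDerivWithinAt
  have hanti : AntitoneOn (fun s => g s * Real.exp (-2 * ∫ τ in a..s, M τ)) (Set.Icc a b) := by
    apply antitoneOn_of_hasDerivWithinAt_nonpos (convex_Icc a b)
      (fun s hs => (hH s hs).continuousWithinAt)
      (fun s hs => (hH s (interior_subset hs)).mono interior_subset)
    intro s hs
    have hs' := interior_subset hs
    have h1 := hle s hs'
    rw [← hMe s hs'] at h1
    have h2 := Real.exp_pos (-2 * ∫ τ in a..s, M τ)
    nlinarith
  have h := hanti (Set.left_mem_Icc.2 hab) (Set.right_mem_Icc.2 hab) hab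
  simp only [intervalIntegral.integral_same, mul_zero, Real.exp_zero, mul_one] at h
  rw [hint]
  have h2 := mul_le_mul_of_nonneg_right h (sq_nonneg (Real.exp (∫ τ in a..b, M τ)))
  have h3 : Real.exp (-2 * ∫ τ in a..b, M τ) * Real.exp (∫ τ in a..b, M τ) ^ 2 = 1 := by
    rw [pow_two, ← Real.exp_add, ← Real.exp_add, ← Real.exp_zero]
    congr 1; ring
  rw [mul_assoc, h3, mul_one] at h2
  exact h2

/-- **Ważewski's inequality.** Let `X` be a real Hilbert space, `I ⊆ ℝ` an
interval, `A : I → 𝓛(X,X)` continuous, and `x : I → X` a solution of `ẋ = A(t)x`.  Then for all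
`t, t₀ ∈ I` with `t ≥ t₀`,
`‖x(t₀)‖·exp(∫_{t₀}^t μ₋(A(τ)) dτ) ≤ ‖x(t)‖ ≤ ‖x(t₀)‖·exp(∫_{t₀}^t μ₊(A(τ)) dτ)`. -/
theorem stmt_1 {X : Type*} [NormedAddCommGroup X] [InnerProductSpace ℝ X] [CompleteSpace X]
    (I : Set ℝ) (hI : I.OrdConnected)
    (A : ℝ → X →L[ℝ] X) (hA : ContinuousOn A I)
    (x : ℝ → X) (hx : ∀ t ∈ I, HasDerivWithinAt x (A t (x t)) I t)
    (t₀ t : ℝ) (ht₀ : t₀ ∈ I) (ht : t ∈ I) (htt₀ : t₀ ≤ t) :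
    ‖x t₀‖ * Real.exp (∫ τ in t₀..t, muMinus (A τ)) ≤ ‖x t‖ ∧
      ‖x t‖ ≤ ‖x t₀‖ * Real.exp (∫ τ in t₀..t, muPlus (A τ)) := by
  have hsub : Set.Icc t₀ t ⊆ I := hI.out ht₀ ht
  have hA' := hA.mono hsub
  have hd : ∀ s ∈ Set.Icc t₀ t, HasDerivWithinAt (fun s => ‖x s‖ ^ 2)
      (2 * ⟪A s (x s), x s⟫) (Set.Icc t₀ t) s := by
    intro s hs
    have h := ((hx s (hsub hs)).mono hsub).norm_sq
    rwa [real_inner_comm] at h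
  constructor
  · have h := waz_gronwall t₀ t htt₀ (fun s => muMinus (A s)) (fun s => -‖x s‖ ^ 2)
      (fun s => -(2 * ⟪A s (x s), x s⟫)) (waz_muMinus_cont.comp_continuousOn hA')
      (fun s hs => (hd s hs).neg) (fun s hs => by
        have := waz_le_inner (A s) (x s)
        linarith)
    refine le_of_abs_le (abs_le_of_sq_le_sq ?_ (norm_nonneg _))
    rw [mul_pow]
    linarith
  · have h := waz_gronwall t₀ t htt₀ (fun s => muPlus (A s)) (fun s => ‖x s‖ ^ 2)
      (fun s => (2 * ⟪A s (x s), x s⟫)) (waz_muPlus_cont.comp_continuousOn hA')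
      (fun s hs => (hd s hs)) (fun s hs => by
        have := waz_inner_le (A s) (x s)
        linarith)
    refine le_of_abs_le (abs_le_of_sq_le_sq ?_ (by positivity))
    rw [mul_pow]
    exact h
end

section
/- Let X be a real Banach space, U ⊆ X open, g : U → ℝ continuous and a C^{1,1}-submersion on its zero set, and suppose Ω = {x ∈ U : g(x) ≤ 0} is closed and connected. Let 𝒟² be any one of the four generalized second-order directional derivative operators D̲²₊, D̲²₋, D̄²₊, D̄²₋. Then Ω is convex if and only if 𝒟²g(x,h²) ≥ 0 for all x ∈ ∂Ω and all h ∈ ker g'(x). -/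
open Filter Topology Metric

/-- Lower right generalized second-order directional derivative
`D̲²₊f(x,h,k) = liminf_{t↓0} (f'(x+th)k − f'(x)k)/t`. -/
noncomputable def lowD2p {X : Type*} [NormedAddCommGroup X] [NormedSpace ℝ X]
    (f : X → ℝ) (x h k : X) : ℝ :=
  liminf (fun t : ℝ => (fderiv ℝ f (x + t • h) k - fderiv ℝ f x k) / t) (𝓝[>] (0:ℝ))

/-- Upper right generalized second-order directional derivative. -/
noncomputable def upD2p {X : Type*} [NormedAddCommGroup X] [NormedSpace ℝ X]
    (f : X → ℝ) (x h k : X) : ℝ :=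
  limsup (fun t : ℝ => (fderiv ℝ f (x + t • h) k - fderiv ℝ f x k) / t) (𝓝[>] (0:ℝ))

/-- Lower left generalized second-order directional derivative. -/
noncomputable def lowD2m {X : Type*} [NormedAddCommGroup X] [NormedSpace ℝ X]
    (f : X → ℝ) (x h k : X) : ℝ :=
  liminf (fun t : ℝ => (fderiv ℝ f (x + t • h) k - fderiv ℝ f x k) / t) (𝓝[<] (0:ℝ))

/-- Upper left generalized second-order directional derivative. -/
noncomputable def upD2m {X : Type*} [NormedAddCommGroup X] [NormedSpace ℝ X]
    (f : X → ℝ) (x h k : X) : ℝ :=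
  limsup (fun t : ℝ => (fderiv ℝ f (x + t • h) k - fderiv ℝ f x k) / t) (𝓝[<] (0:ℝ))

/-- `g` is a `C^{1,1}`-submersion on its zero set: on a neighborhood of each point of
`g⁻¹(0) ∩ U`, `g` is `C¹` with Lipschitz-continuous derivative, and `g'(x) ≠ 0` at each such
point. -/
def IsC11SubmersionOnZeroSet {X : Type*} [NormedAddCommGroup X] [NormedSpace ℝ X]
    (g : X → ℝ) (U : Set X) : Prop :=
  ∀ x ∈ U, g x = 0 →
    (∃ ε > 0, ball x ε ⊆ U ∧ ContDiffOn ℝ 1 g (ball x ε) ∧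
      ∃ L : NNReal, LipschitzOnWith L (fun y => fderiv ℝ g y) (ball x ε)) ∧
    fderiv ℝ g x ≠ 0


section helpers
variable {X : Type*} [NormedAddCommGroup X] [NormedSpace ℝ X]

/-- Local data at a zero of `g`. -/
def LocData (g : X → ℝ) (U : Set X) (x : X) (r : ℝ) (L : NNReal) (v : X) : Prop :=
  0 < r ∧ ball x r ⊆ U ∧ (∀ y ∈ ball x r, ContDiffAt ℝ 1 g y) ∧
    LipschitzOnWith L (fun y => fderiv ℝ g y) (ball x r) ∧ fderiv ℝ g x v = 1 ∧
    ∀ y ∈ ball x r, 1 / 2 ≤ fderiv ℝ g y v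

lemma exists_locData {g : X → ℝ} {U : Set X} (hgs : IsC11SubmersionOnZeroSet g U)
    {x : X} (hx : x ∈ U) (hg : g x = 0) : ∃ r L v, LocData g U x r L v := by
  obtain ⟨⟨ε, hε, hsub, hcd, L, hL⟩, hne⟩ := hgs x hx hg
  obtain ⟨w, hw⟩ : ∃ w, fderiv ℝ g x w ≠ 0 := by
    by_contra! hcon
    exact hne (ContinuousLinearMap.ext hcon)
  set v := (fderiv ℝ g x w)⁻¹ • w with hv
  have hv1 : fderiv ℝ g x v = 1 := by
    rw [hv, map_smul, smul_eq_mul, inv_mul_cancel₀ hw]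
  have hcont : ContinuousAt (fun y => fderiv ℝ g y v) x := by
    have h1 : ContinuousAt (fun y => fderiv ℝ g y) x :=
      hL.continuousOn.continuousAt (ball_mem_nhds x hε)
    exact h1.clm_apply continuousAt_const
  have hev : ∀ᶠ y in 𝓝 x, (1:ℝ) / 2 < fderiv ℝ g y v := by
    apply hcont.eventually_const_lt
    simp only [hv1]; norm_num
  obtain ⟨δ, hδ, hδs⟩ := Metric.eventually_nhds_iff_ball.1 hev
  refine ⟨min ε δ, L, v, lt_min hε hδ, ?_, ?_, ?_, hv1, ?_⟩
  · exact (ball_subset_ball (min_le_left _ _)).trans hsub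
  · intro y hy
    exact hcd.contDiffAt (isOpen_ball.mem_nhds (ball_subset_ball (min_le_left _ _) hy))
  · exact hL.mono (ball_subset_ball (min_le_left _ _))
  · intro y hy
    exact (hδs y (ball_subset_ball (min_le_right _ _) hy)).le

lemma LocData.differentiableAt {g : X → ℝ} {U : Set X} {x : X} {r : ℝ} {L : NNReal} {v : X}
    (h : LocData g U x r L v) {y : X} (hy : y ∈ ball x r) : DifferentiableAt ℝ g y :=
  (h.2.2.1 y hy).differentiableAt (by norm_num)

lemma hasDerivAt_line {g : X → ℝ} {y w : X} {t : ℝ} (h : DifferentiableAt ℝ g (y + t • w)) :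
    HasDerivAt (fun t : ℝ => g (y + t • w)) (fderiv ℝ g (y + t • w) w) t := by
  have h1 : HasDerivAt (fun t : ℝ => y + t • w) w t := by
    simpa using ((hasDerivAt_id t).smul_const w).const_add y
  exact h.hasFDerivAt.comp_hasDerivAt t h1

lemma LocData.mono {g : X → ℝ} {U : Set X} {x : X} {r : ℝ} {L : NNReal} {v : X}
    (h : LocData g U x r L v) {y : X} {s : ℝ} (hy : y ∈ ball x r) (hs : 0 ≤ s)
    (hys : y + s • v ∈ ball x r) : g y + s / 2 ≤ g (y + s • v) := by
  have hb : ∀ t ∈ Set.Icc 0 s, y + t • v ∈ ball x r := by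
    intro t ht
    rcases hs.eq_or_lt with h0 | h0
    · have : t = 0 := le_antisymm (h0 ▸ ht.2) ht.1
      simpa [this] using hy
    · have := (convex_ball x r).add_smul_mem hy hys (t := t / s)
        ⟨div_nonneg ht.1 hs, (div_le_one h0).2 ht.2⟩
      rwa [smul_smul, div_mul_cancel₀ _ h0.ne'] at this
  have hd : ∀ t ∈ Set.Icc 0 s, HasDerivAt (fun t : ℝ => g (y + t • v))
      (fderiv ℝ g (y + t • v) v) t := fun t ht => hasDerivAt_line (h.differentiableAt (hb t ht))
  have := Convex.mul_sub_le_image_sub_of_le_deriv (convex_Icc 0 s)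
    (fun t ht => (hd t ht).continuousAt.continuousWithinAt)
    (fun t ht => (hd t (interior_subset ht)).differentiableAt.differentiableWithinAt)
    (C := 1 / 2) (fun t ht => by
      rw [(hd t (interior_subset ht)).deriv]
      exact h.2.2.2.2.2 _ (hb t (interior_subset ht)))
    0 ⟨le_rfl, hs⟩ s ⟨hs, le_rfl⟩ hs
  simp only [zero_smul, add_zero] at this
  linarith

lemma line_tendsto (x h : X) : Tendsto (fun t : ℝ => x + t • h) (𝓝 0) (𝓝 x) := by
  have : Continuous (fun t : ℝ => x + t • h) := by fun_prop
  simpa using this.tendsto 0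

lemma LocData.lip {g : X → ℝ} {U : Set X} {x : X} {r : ℝ} {L : NNReal} {v : X}
    (h : LocData g U x r L v) {y z : X} (hy : y ∈ ball x r) (hz : z ∈ ball x r) (k : X) :
    |fderiv ℝ g y k - fderiv ℝ g z k| ≤ L * ‖y - z‖ * ‖k‖ := by
  have h1 := h.2.2.2.1.norm_sub_le hy hz
  rw [← sub_apply, ← Real.norm_eq_abs]
  exact (ContinuousLinearMap.le_opNorm _ _).trans (by gcongr)

lemma LocData.quot_bdd {g : X → ℝ} {U : Set X} {x : X} {r : ℝ} {L : NNReal} {v : X}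
    (hx : LocData g U x r L v) (h : X) : ∀ᶠ t in 𝓝 (0:ℝ),
    |(fderiv ℝ g (x + t • h) h - fderiv ℝ g x h) / t| ≤ L * ‖h‖ * ‖h‖ := by
  filter_upwards [(line_tendsto x h).eventually (ball_mem_nhds x hx.1)] with t ht
  have := hx.lip ht (mem_ball_self hx.1) h
  rcases eq_or_ne t 0 with h0 | h0
  · simp [h0]; positivity
  · rw [abs_div, div_le_iff₀ (abs_pos.2 h0)]
    rw [add_sub_cancel_left, norm_smul, Real.norm_eq_abs] at this
    linarith

lemma bdd_aux {l : Filter ℝ} {u : ℝ → ℝ} {C : ℝ} (h : ∀ᶠ t in l, |u t| ≤ C) :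
    l.IsBoundedUnder (· ≤ ·) u ∧ l.IsBoundedUnder (· ≥ ·) u := by
  constructor
  · exact ⟨C, eventually_map.2 (h.mono fun t ht => (abs_le.1 ht).2)⟩
  · exact ⟨-C, eventually_map.2 (h.mono fun t ht => (abs_le.1 ht).1)⟩

lemma freq_of_limsup {l : Filter ℝ} [l.NeBot] {u : ℝ → ℝ} {C : ℝ} (h : ∀ᶠ t in l, |u t| ≤ C)
    (h0 : 0 ≤ liminf u l ∨ 0 ≤ limsup u l) {c : ℝ} (hc : 0 < c) : ∃ᶠ t in l, -c < u t := by
  obtain ⟨h1, h2⟩ := bdd_aux h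
  have h3 : 0 ≤ limsup u l := by
    rcases h0 with h0 | h0
    · exact h0.trans (liminf_le_limsup h1 h2)
    · exact h0
  exact frequently_lt_of_lt_limsup h2.isCoboundedUnder_flip (by linarith)

lemma nonneg_of_eventually {l : Filter ℝ} [l.NeBot] {u : ℝ → ℝ} {C : ℝ}
    (h : ∀ᶠ t in l, |u t| ≤ C)
    (h0 : ∀ c > 0, ∀ᶠ t in l, -c ≤ u t) : 0 ≤ liminf u l ∧ 0 ≤ limsup u l := by
  obtain ⟨h1, h2⟩ := bdd_aux h
  have h3 : 0 ≤ liminf u l := by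
    apply le_of_forall_pos_le_add
    intro c hc
    have := le_liminf_of_le h1.isCoboundedUnder_flip (h0 c hc)
    linarith
  exact ⟨h3, h3.trans (liminf_le_limsup h1 h2)⟩

lemma quot_neg (g : X → ℝ) (x h : X) (t : ℝ) :
    (fderiv ℝ g (x + (-t) • h) h - fderiv ℝ g x h) / (-t) =
    (fderiv ℝ g (x + t • (-h)) (-h) - fderiv ℝ g x (-h)) / t := by
  rw [map_neg, map_neg, neg_smul, smul_neg, div_neg]
  ring

lemma tendsto_neg0 : Tendsto (fun t : ℝ => -t) (𝓝[<] 0) (𝓝[>] 0) := by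
  have := tendsto_neg_nhdsLT (a := (0:ℝ))
  simpa using this

/-- reduction: from the operator condition to a frequent inequality. -/
lemma red_freq {g : X → ℝ} {U : Set X} {x : X} {r : ℝ} {L : NNReal} {v : X}
    (hx : LocData g U x r L v) {D : (X → ℝ) → X → X → X → ℝ}
    (hD : D = lowD2p ∨ D = upD2p ∨ D = lowD2m ∨ D = upD2m)
    (hn : ∀ h : X, fderiv ℝ g x h = 0 → 0 ≤ D g x h h) {h : X} (hh : fderiv ℝ g x h = 0)
    {c : ℝ} (hc : 0 < c) : ∃ᶠ t in 𝓝[>] (0:ℝ), -c < fderiv ℝ g (x + t • h) h / t := by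
  have key : ∃ᶠ t in 𝓝[>] (0:ℝ), -c < (fderiv ℝ g (x + t • h) h - fderiv ℝ g x h) / t := by
    have hb := hx.quot_bdd h
    have hb' := hx.quot_bdd (-h)
    have h1 := hn h hh
    have h2 := hn (-h) (by simp [hh])
    have minus : (∃ᶠ t in 𝓝[<] (0:ℝ),
        -c < (fderiv ℝ g (x + t • (-h)) (-h) - fderiv ℝ g x (-h)) / t) →
        ∃ᶠ t in 𝓝[>] (0:ℝ), -c < (fderiv ℝ g (x + t • h) h - fderiv ℝ g x h) / t := by
      intro hf
      apply tendsto_neg0.frequently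
      refine hf.mono fun t ht => ?_
      rwa [quot_neg]
    rcases hD with rfl | rfl | rfl | rfl
    · exact freq_of_limsup (hb.filter_mono nhdsWithin_le_nhds) (Or.inl h1) hc
    · exact freq_of_limsup (hb.filter_mono nhdsWithin_le_nhds) (Or.inr h1) hc
    · exact minus (freq_of_limsup (hb'.filter_mono nhdsWithin_le_nhds) (Or.inl h2) hc)
    · exact minus (freq_of_limsup (hb'.filter_mono nhdsWithin_le_nhds) (Or.inr h2) hc)
  simpa [hh] using key

lemma red_nonneg {g : X → ℝ} {U : Set X} {x : X} {r : ℝ} {L : NNReal} {v : X}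
    (hx : LocData g U x r L v) {D : (X → ℝ) → X → X → X → ℝ}
    (hD : D = lowD2p ∨ D = upD2p ∨ D = lowD2m ∨ D = upD2m)
    (hn : ∀ h : X, fderiv ℝ g x h = 0 → ∀ c > 0,
      ∀ᶠ t in 𝓝[>] (0:ℝ), -c ≤ fderiv ℝ g (x + t • h) h / t)
    {h : X} (hh : fderiv ℝ g x h = 0) : 0 ≤ D g x h h := by
  have hb := hx.quot_bdd h
  have plus : ∀ c > 0, ∀ᶠ t in 𝓝[>] (0:ℝ),
      -c ≤ (fderiv ℝ g (x + t • h) h - fderiv ℝ g x h) / t := by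
    intro c hc
    simpa [hh] using hn h hh c hc
  have minus : ∀ c > 0, ∀ᶠ t in 𝓝[<] (0:ℝ),
      -c ≤ (fderiv ℝ g (x + t • h) h - fderiv ℝ g x h) / t := by
    intro c hc
    have h2 := tendsto_neg0.eventually (hn (-h) (by simp [hh]) c hc)
    refine h2.mono fun t ht => ?_
    have := quot_neg g x h (-t)
    rw [neg_neg] at this
    rw [this]
    simpa [hh] using ht
  have P := nonneg_of_eventually (hb.filter_mono nhdsWithin_le_nhds) plus
  have M := nonneg_of_eventually (hb.filter_mono nhdsWithin_le_nhds) minus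
  rcases hD with rfl | rfl | rfl | rfl
  · exact P.1
  · exact P.2
  · exact M.1
  · exact M.2



lemma neg_of_deriv {φ : ℝ → ℝ} {d : ℝ} (h : HasDerivAt φ d 0) (h0 : φ 0 = 0) (hd : d < 0) :
    ∀ᶠ s in 𝓝[>] (0:ℝ), φ s < 0 := by
  have h1 := h.tendsto_slope_zero_right
  filter_upwards [h1.eventually_lt_const hd, self_mem_nhdsWithin] with s hs hs0
  have hs0 : 0 < s := hs0
  rw [zero_add, h0, sub_zero, smul_eq_mul] at hs
  by_contra! hcon
  have : 0 ≤ s⁻¹ * φ s := by positivity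
  linarith

lemma support_ineq {g : X → ℝ} {Ω : Set X} (hneg : ∀ z ∈ Ω, g z ≤ 0) (hc : Convex ℝ Ω)
    {y z : X} (hy : y ∈ Ω) (hgy : g y = 0) (hd : DifferentiableAt ℝ g y) (hz : z ∈ Ω) :
    fderiv ℝ g y (z - y) ≤ 0 := by
  by_contra! hcon
  have h1 : HasDerivAt (fun t : ℝ => g (y + t • (z - y))) (fderiv ℝ g y (z - y)) 0 := by
    have := hasDerivAt_line (g := g) (y := y) (w := z - y) (t := 0) (by simpa using hd)
    simpa using this
  have h2 := neg_of_deriv h1.neg (by simp [hgy]) (by linarith)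
  have h3 : ∀ᶠ s in 𝓝[>] (0:ℝ), s < 1 := nhdsWithin_le_nhds (gt_mem_nhds one_pos)
  obtain ⟨s, hs, hs1, hs0⟩ := (h2.and (h3.and self_mem_nhdsWithin)).exists
  have hs0 : 0 < s := hs0
  have := hneg _ (hc.add_smul_sub_mem hy hz ⟨hs0.le, hs1.le⟩)
  simp at hs
  linarith

lemma conv_dir {g : X → ℝ} {U Ω : Set X} (hUo : IsOpen U) (hgc : ContinuousOn g U)
    (hΩ : Ω = {x ∈ U | g x ≤ 0}) (hc : Convex ℝ Ω) {x : X} {r : ℝ} {L : NNReal} {v : X}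
    (hx : LocData g U x r L v) (hgx : g x = 0) {h : X} (hh : fderiv ℝ g x h = 0)
    {c : ℝ} (hc0 : 0 < c) : ∀ᶠ t in 𝓝[>] (0:ℝ), -c ≤ fderiv ℝ g (x + t • h) h / t := by
  have hneg : ∀ z ∈ Ω, g z ≤ 0 := by
    intro z hz; rw [hΩ] at hz; exact hz.2
  have hxb : x ∈ ball x r := mem_ball_self hx.1
  have hxΩ : x ∈ Ω := by rw [hΩ]; exact ⟨hx.2.1 hxb, hgx.le⟩
  set c' := c / (L * ‖v‖ * ‖h‖ + 1) with hc'
  have hpos : (0:ℝ) < L * ‖v‖ * ‖h‖ + 1 := by positivity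
  have hc'0 : 0 < c' := by positivity
  have hc'1 : L * ‖v‖ * ‖h‖ * c' ≤ c := by
    rw [hc', ← mul_div_assoc, div_le_iff₀ hpos]
    nlinarith
  have e1 : ∀ᶠ t in 𝓝[>] (0:ℝ), g (x + t • (h - c' • v)) < 0 := by
    have := hasDerivAt_line (g := g) (y := x) (w := h - c' • v) (t := 0)
      (by simpa using hx.differentiableAt hxb)
    refine neg_of_deriv this (by simpa using hgx) ?_
    simp [hh, hx.2.2.2.2.1, hc'0]
  have e2 : ∀ᶠ t in 𝓝[>] (0:ℝ), x + t • h ∈ ball x r :=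
    nhdsWithin_le_nhds ((line_tendsto x h).eventually (ball_mem_nhds x hx.1))
  have e3 : ∀ᶠ t in 𝓝[>] (0:ℝ), x + t • (h - c' • v) ∈ ball x r :=
    nhdsWithin_le_nhds ((line_tendsto x (h - c' • v)).eventually (ball_mem_nhds x hx.1))
  filter_upwards [e1, e2, e3, self_mem_nhdsWithin] with t h1 h2 h3 ht
  have ht : 0 < t := ht
  -- nonnegativity of g on the tangent line
  have hge : 0 ≤ g (x + t • h) := by
    by_contra! hcon
    have hca : ContinuousAt g (x + t • h) := (hx.differentiableAt h2).continuousAt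
    have hev : ∀ᶠ y in 𝓝 (x + t • h), g y < 0 ∧ y ∈ U :=
      (hca.eventually_lt_const hcon).and (hUo.mem_nhds (hx.2.1 h2))
    have hev2 := (line_tendsto (x + t • h) v).eventually hev
    obtain ⟨s, ⟨hs, hsU⟩, hs0⟩ :=
      ((hev2.filter_mono (nhdsWithin_le_nhds (s := Set.Ioi 0))).and self_mem_nhdsWithin).exists
    have hs0 : 0 < s := hs0
    have := support_ineq hneg hc hxΩ hgx (hx.differentiableAt hxb)
      (z := x + t • h + s • v) (by rw [hΩ]; exact ⟨hsU, hs.le⟩)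
    rw [add_assoc, add_sub_cancel_left, map_add, map_smul, map_smul, hh, hx.2.2.2.2.1] at this
    simp at this
    linarith
  have hb : ∀ s ∈ Set.Icc 0 (c' * t), x + t • h - s • v ∈ ball x r := by
    intro s hs
    have hct : 0 < c' * t := by positivity
    have := (convex_ball x r).add_smul_sub_mem h2 h3 (t := s / (c' * t))
        ⟨div_nonneg hs.1 hct.le, (div_le_one hct).2 hs.2⟩
    convert this using 1
    have e : x + t • (h - c' • v) - (x + t • h) = (c' * t) • (-v) := by
      module
    rw [e, smul_smul, div_mul_cancel₀ _ hct.ne', smul_neg, sub_eq_add_neg]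
  have hcont : ContinuousOn (fun s : ℝ => g (x + t • h - s • v)) (Set.Icc 0 (c' * t)) := by
    intro s hs
    have h4 : ContinuousAt g (x + t • h - s • v) := (hx.differentiableAt (hb s hs)).continuousAt
    have h5 : ContinuousAt (fun s : ℝ => x + t • h - s • v) s := by fun_prop
    exact (ContinuousAt.comp (f := fun s : ℝ => x + t • h - s • v) h4 h5).continuousWithinAt
  have e : x + t • (h - c' • v) = x + t • h - (c' * t) • v := by module
  obtain ⟨s, hs, hgs⟩ := intermediate_value_Icc' (by positivity) hcont
    (show (0:ℝ) ∈ _ from ⟨by rw [← e]; exact h1.le, by simpa using hge⟩)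
  simp only at hgs
  have hyb := hb s hs
  have hyΩ : x + t • h - s • v ∈ Ω := by rw [hΩ]; exact ⟨hx.2.1 hyb, hgs.le⟩
  have h6 := support_ineq hneg hc hyΩ hgs (hx.differentiableAt hyb) hxΩ
  have e' : x - (x + t • h - s • v) = s • v - t • h := by module
  rw [e', map_sub, map_smul, map_smul, smul_eq_mul, smul_eq_mul] at h6
  have h7 := hx.2.2.2.2.2 _ hyb
  have h8 := hx.lip h2 hyb h
  rw [sub_sub_cancel, norm_smul, Real.norm_eq_abs, abs_of_nonneg hs.1] at h8
  have h9 : 0 ≤ fderiv ℝ g (x + t • h - s • v) h := by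
    by_contra! hcon
    have := mul_neg_of_pos_of_neg ht hcon
    have := mul_nonneg hs.1 (le_trans (by norm_num) h7)
    linarith
  rw [le_div_iff₀ ht]
  have h10 := (abs_le.1 h8).1
  have h11 : L * (s * ‖v‖) * ‖h‖ ≤ c * t := by
    calc L * (s * ‖v‖) * ‖h‖ = (L * ‖v‖ * ‖h‖) * s := by ring
      _ ≤ (L * ‖v‖ * ‖h‖) * (c' * t) := by gcongr; exact hs.2
      _ = (L * ‖v‖ * ‖h‖ * c') * t := by ring
      _ ≤ c * t := by gcongr
  linarith

lemma exists_psi {g : X → ℝ} {x h v : X} (hcd : ContDiffAt ℝ 1 g x) (hv : fderiv ℝ g x v = 1)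
    (hgx : g x = 0) : ∃ ψ : ℝ → ℝ, ContDiffAt ℝ 1 ψ 0 ∧ ψ 0 = 0 ∧
      ∀ᶠ t in 𝓝 (0:ℝ), g (x + t • h + ψ t • v) = 0 := by
  set F : ℝ × ℝ → ℝ := fun z => g (x + z.1 • h + z.2 • v) with hF
  have hA : ContDiff ℝ 1 (fun z : ℝ × ℝ => x + z.1 • h + z.2 • v) := by fun_prop
  have hA0 : x + ((0:ℝ), (0:ℝ)).1 • h + ((0:ℝ), (0:ℝ)).2 • v = x := by simp
  have hFc : ContDiffAt ℝ 1 F (0, 0) := by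
    refine ContDiffAt.comp (f := fun z : ℝ × ℝ => x + z.1 • h + z.2 • v) (0, 0) ?_ hA.contDiffAt
    rw [hA0]; exact hcd
  have hAd : HasFDerivAt (fun z : ℝ × ℝ => x + z.1 • h + z.2 • v)
      ((ContinuousLinearMap.fst ℝ ℝ ℝ).smulRight h + (ContinuousLinearMap.snd ℝ ℝ ℝ).smulRight v)
      (0, 0) := by
    exact (((ContinuousLinearMap.fst ℝ ℝ ℝ).smulRight h).hasFDerivAt.const_add x).add
      ((ContinuousLinearMap.snd ℝ ℝ ℝ).smulRight v).hasFDerivAt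
  have hFd : HasFDerivAt F ((fderiv ℝ g x).comp ((ContinuousLinearMap.fst ℝ ℝ ℝ).smulRight h +
      (ContinuousLinearMap.snd ℝ ℝ ℝ).smulRight v)) (0, 0) := by
    refine HasFDerivAt.comp (f := fun z : ℝ × ℝ => x + z.1 • h + z.2 • v) (0, 0) ?_ hAd
    rw [hA0]; exact (hcd.differentiableAt (by norm_num)).hasFDerivAt
  have hinv : (fderiv ℝ F (0, 0) ∘L .inr ℝ ℝ ℝ).IsInvertible := by
    have : fderiv ℝ F (0, 0) ∘L .inr ℝ ℝ ℝ =
        ((ContinuousLinearEquiv.refl ℝ ℝ : ℝ ≃L[ℝ] ℝ) : ℝ →L[ℝ] ℝ) := by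
      rw [hFd.fderiv]
      ext
      simp [hv]
    rw [this]
    exact ContinuousLinearMap.isInvertible_equiv
  refine ⟨hFc.implicitFunction (by norm_num) hinv, ?_, ?_, ?_⟩
  · exact hFc.contDiffAt_implicitFunction (by norm_num) hinv
  · exact hFc.implicitFunction_apply_self (by norm_num) hinv
  · have := hFc.eventually_apply_implicitFunction (by norm_num) hinv
    refine this.mono fun t ht => ?_
    simp only [hF] at ht
    simpa [hgx] using ht

lemma key_right {g : X → ℝ} {U : Set X} {x : X} {r : ℝ} {L : NNReal} {v : X}
    (hx : LocData g U x r L v) (hgx : g x = 0)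
    (hdini : ∀ q ∈ U, g q = 0 → ∀ k, fderiv ℝ g q k = 0 → ∀ c > 0,
      ∃ᶠ t in 𝓝[>] (0:ℝ), -c < fderiv ℝ g (q + t • k) k / t)
    {h : X} (hle : ∀ᶠ t in 𝓝 (0:ℝ), g (x + t • h) ≤ 0) :
    ∀ᶠ t in 𝓝[>] (0:ℝ), g (x + t • h) = 0 := by
  have hxb : x ∈ ball x r := mem_ball_self hx.1
  have hh : fderiv ℝ g x h = 0 := by
    have h1 := hasDerivAt_line (g := g) (y := x) (w := h) (t := 0)
      (by simpa using hx.differentiableAt hxb)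
    have h2 : IsLocalMax (fun t : ℝ => g (x + t • h)) 0 := by
      refine hle.mono fun t ht => ?_
      simpa [hgx] using ht
    have := h2.hasDerivAt_eq_zero h1
    simpa using this
  obtain ⟨ψ, hψc, hψ0, hψ⟩ := exists_psi (h := h) (hx.2.2.1 x hxb) hx.2.2.2.2.1 hgx
  set q : ℝ → X := fun t => x + t • h + ψ t • v with hq
  have hqc : Tendsto q (𝓝 0) (𝓝 x) := by
    have h1 : ContinuousAt ψ 0 := hψc.continuousAt
    have : ContinuousAt q 0 := by
      simp only [hq]; fun_prop
    have h2 := this.tendsto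
    simpa [hq, hψ0] using h2
  have hev : ∀ᶠ t in 𝓝 (0:ℝ), ContDiffAt ℝ 1 ψ t ∧ q t ∈ ball x r ∧ x + t • h ∈ ball x r ∧
      g (q t) = 0 ∧ g (x + t • h) ≤ 0 :=
    (hψc.eventually (by simp)).and <| (hqc.eventually (ball_mem_nhds x hx.1)).and <|
      ((line_tendsto x h).eventually (ball_mem_nhds x hx.1)).and <| hψ.and hle
  obtain ⟨δ, hδ, H⟩ := Metric.eventually_nhds_iff_ball.1 hev
  have hψd : ∀ t ∈ ball (0:ℝ) δ, HasDerivAt ψ (deriv ψ t) t := fun t ht =>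
    ((H t ht).1.differentiableAt (by norm_num)).hasDerivAt
  have hψcont : ContinuousOn (deriv ψ) (ball 0 δ) := by
    have : ContDiffOn ℝ 1 ψ (ball 0 δ) := fun t ht => (H t ht).1.contDiffWithinAt
    exact this.continuousOn_deriv_of_isOpen isOpen_ball (by norm_num)
  have hqd : ∀ t ∈ ball (0:ℝ) δ, HasDerivAt q (h + deriv ψ t • v) t := by
    intro t ht
    have h1 : HasDerivAt (fun t : ℝ => x + t • h) h t := by
      simpa using ((hasDerivAt_id t).smul_const h).const_add x
    exact h1.add ((hψd t ht).smul_const v)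
  have hchain : ∀ t ∈ ball (0:ℝ) δ, fderiv ℝ g (q t) (h + deriv ψ t • v) = 0 := by
    intro t ht
    have h1 := (hx.differentiableAt (H t ht).2.1).hasFDerivAt.comp_hasDerivAt t (hqd t ht)
    have h2 : (g ∘ q) =ᶠ[𝓝 t] fun _ => 0 := by
      filter_upwards [isOpen_ball.mem_nhds ht] with s hs using (H s hs).2.2.2.1
    exact h1.unique ((hasDerivAt_const t (0:ℝ)).congr_of_eventuallyEq h2)
  have hψnn : ∀ t ∈ ball (0:ℝ) δ, 0 ≤ ψ t := by
    intro t ht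
    by_contra! hcon
    obtain ⟨-, h1, h2, h3, h4⟩ := H t ht
    have e : q t + (-ψ t) • v = x + t • h := by simp only [hq]; module
    have := hx.mono h1 (s := -ψ t) (by linarith) (by rw [e]; exact h2)
    rw [e] at this
    linarith
  set b := δ / 2 with hb
  have hsub : Set.Icc 0 b ⊆ ball (0:ℝ) δ := by
    intro t ht
    rw [mem_ball_zero_iff, Real.norm_eq_abs, abs_of_nonneg ht.1]
    linarith [ht.2]
  have h0 : (0:ℝ) ∈ ball (0:ℝ) δ := mem_ball_self hδ
  have hψ'0 : deriv ψ 0 = 0 := by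
    have := hchain 0 h0
    have hq0 : q 0 = x := by simp [hq, hψ0]
    rw [hq0, map_add, map_smul, hh, hx.2.2.2.2.1] at this
    simpa using this
  have hdle : ∀ ⦃t⦄, t ∈ Set.Icc 0 b → deriv ψ t ≤ 0 := by
    refine image_le_of_liminf_slope_right_le_deriv_boundary (B := fun _ => 0) (B' := fun _ => 0)
      (hψcont.mono hsub) hψ'0.le continuousOn_const (fun t _ => hasDerivWithinAt_const _ _ _) ?_
    intro t ht ρ hρ
    have htb : t ∈ ball (0:ℝ) δ := hsub ⟨ht.1, ht.2.le⟩
    set k := h + deriv ψ t • v with hk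
    obtain ⟨-, h1, -, h3, -⟩ := H t htb
    have hfr := hdini (q t) (hx.2.1 h1) h3 k (hchain t htb) (ρ / 4) (by linarith)
    have htend : Tendsto (fun τ : ℝ => t + τ) (𝓝[>] 0) (𝓝[>] t) := by
      refine tendsto_nhdsWithin_iff.2 ⟨?_, ?_⟩
      · have : Tendsto (fun τ : ℝ => t + τ) (𝓝 0) (𝓝 t) := by
          simpa using (continuous_const_add t).tendsto 0
        exact this.mono_left nhdsWithin_le_nhds
      · filter_upwards [self_mem_nhdsWithin] with τ hτ
        have : 0 < τ := hτ
        simpa using this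
    apply htend.frequently
    set η := ρ / (4 * (L * ‖k‖ + 1)) with hη
    have hpos : (0:ℝ) < L * ‖k‖ + 1 := by positivity
    have hη0 : 0 < η := by positivity
    have hη1 : L * ‖k‖ * η ≤ ρ / 4 := by
      rw [hη, ← mul_div_assoc, div_le_iff₀ (by positivity)]
      nlinarith
    have hlo : ∀ᶠ τ in 𝓝[>] (0:ℝ), ‖q (t + τ) - q t - τ • k‖ ≤ η * ‖τ‖ :=
      nhdsWithin_le_nhds ((hasDerivAt_iff_isLittleO_nhds_zero.1 (hqd t htb)).bound hη0)
    have hb1 : ∀ᶠ τ in 𝓝[>] (0:ℝ), t + τ ∈ ball (0:ℝ) δ :=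
      htend.eventually (nhdsWithin_le_nhds (isOpen_ball.mem_nhds htb))
    have hb2 : ∀ᶠ τ in 𝓝[>] (0:ℝ), q t + τ • k ∈ ball x r :=
      nhdsWithin_le_nhds ((line_tendsto (q t) k).eventually (isOpen_ball.mem_nhds h1))
    refine (hfr.and_eventually (hlo.and (hb1.and (hb2.and self_mem_nhdsWithin)))).mono ?_
    rintro τ ⟨f1, f2, f3, f4, hτ⟩
    have hτ : 0 < τ := hτ
    rw [lt_div_iff₀ hτ] at f1
    rw [Real.norm_eq_abs, abs_of_pos hτ] at f2
    obtain ⟨-, g1, -, -, -⟩ := H _ f3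
    have hA := hx.2.2.2.2.2 _ g1
    have hlip := (abs_le.1 (hx.lip g1 f4 k)).1
    rw [← sub_sub] at hlip
    have hlip2 : L * ‖q (t + τ) - q t - τ • k‖ * ‖k‖ ≤ ρ / 4 * τ := by
      calc L * ‖q (t + τ) - q t - τ • k‖ * ‖k‖ ≤ L * (η * τ) * ‖k‖ := by gcongr
        _ = L * ‖k‖ * η * τ := by ring
        _ ≤ ρ / 4 * τ := by gcongr
    have hch := hchain _ f3
    have hkk : fderiv ℝ g (q (t + τ)) k =
        (deriv ψ t - deriv ψ (t + τ)) * fderiv ℝ g (q (t + τ)) v := by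
      have : k = (h + deriv ψ (t + τ) • v) + (deriv ψ t - deriv ψ (t + τ)) • v := by
        rw [hk]; module
      rw [this, map_add, hch, zero_add, map_smul, smul_eq_mul]
    rw [slope_def_field, add_sub_cancel_left, div_lt_iff₀ hτ]
    by_contra! hcon
    have hp : 0 < ρ * τ := by positivity
    nlinarith
  have hanti : AntitoneOn ψ (Set.Icc 0 b) := by
    refine antitoneOn_of_deriv_nonpos (convex_Icc 0 b)
      (fun t ht => (hψd t (hsub ht)).continuousAt.continuousWithinAt)
      (fun t ht => (hψd t (hsub (interior_subset ht))).differentiableAt.differentiableWithinAt)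
      (fun t ht => hdle (interior_subset ht))
  have hbp : 0 < b := by positivity
  filter_upwards [Ioo_mem_nhdsGT hbp] with t ht
  have htI : t ∈ Set.Icc 0 b := ⟨ht.1.le, ht.2.le⟩
  have h1 : ψ t ≤ 0 := hψ0 ▸ hanti ⟨le_rfl, hbp.le⟩ htI ht.1.le
  have h2 : ψ t = 0 := le_antisymm h1 (hψnn t (hsub htI))
  have := (H t (hsub htI)).2.2.2.1
  simpa [hq, h2] using this

/-- A segment in `Ω` with endpoints in the open set `{g < 0}` stays in that set. -/
lemma seg_interior {g : X → ℝ} {U Ω : Set X} (hgc : ContinuousOn g U)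
    (hgs : IsC11SubmersionOnZeroSet g U) (hΩ : Ω = {x ∈ U | g x ≤ 0})
    (hdini : ∀ q ∈ U, g q = 0 → ∀ k, fderiv ℝ g q k = 0 → ∀ c > 0,
      ∃ᶠ t in 𝓝[>] (0:ℝ), -c < fderiv ℝ g (q + t • k) k / t)
    {x y : X} (hx : g x < 0) (hy : g y < 0) (hseg : segment ℝ x y ⊆ Ω) :
    segment ℝ x y ⊆ {z ∈ U | g z < 0} := by
  have hm : ∀ t ∈ Set.Icc (0:ℝ) 1, x + t • (y - x) ∈ U ∧ g (x + t • (y - x)) ≤ 0 := by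
    intro t ht
    have : x + t • (y - x) ∈ Ω := hseg (by rw [segment_eq_image']; exact ⟨t, ht, rfl⟩)
    rwa [hΩ] at this
  have hcont : ContinuousOn (fun t : ℝ => g (x + t • (y - x))) (Set.Icc 0 1) :=
    hgc.comp (by fun_prop) (fun t ht => (hm t ht).1)
  rw [segment_eq_image']
  rintro _ ⟨t, ht, rfl⟩
  refine ⟨(hm t ht).1, lt_of_le_of_ne (hm t ht).2 fun h0 => ?_⟩
  set Z := Set.Icc (0:ℝ) 1 ∩ (fun t : ℝ => g (x + t • (y - x))) ⁻¹' {0} with hZ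
  have hZc : IsCompact Z := isCompact_Icc.of_isClosed_subset
    (hcont.preimage_isClosed_of_isClosed isClosed_Icc isClosed_singleton) Set.inter_subset_left
  obtain ⟨s, ⟨hsI, hs0⟩, hmax⟩ := hZc.exists_isGreatest ⟨t, ht, h0⟩
  have hs0 : g (x + s • (y - x)) = 0 := hs0
  have hsp : 0 < s := by
    refine lt_of_le_of_ne hsI.1 fun h => ?_
    rw [← h] at hs0; simp at hs0; linarith
  have hs1 : s < 1 := by
    refine lt_of_le_of_ne hsI.2 fun h => ?_
    rw [h] at hs0; simp at hs0; linarith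
  obtain ⟨r, L, v, hl⟩ := exists_locData hgs (hm s hsI).1 hs0
  have hnear : ∀ᶠ τ in 𝓝 (0:ℝ), s + τ ∈ Set.Icc (0:ℝ) 1 := by
    have : Tendsto (fun τ : ℝ => s + τ) (𝓝 0) (𝓝 s) := by
      simpa using (continuous_const_add s).tendsto 0
    exact this.eventually (Icc_mem_nhds hsp hs1)
  have e : ∀ τ : ℝ, x + s • (y - x) + τ • (y - x) = x + (s + τ) • (y - x) := by
    intro τ; module
  have hk := key_right hl hs0 hdini (h := y - x) (hnear.mono fun τ hτ => by
    rw [e]; exact (hm _ hτ).2)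
  obtain ⟨τ, h1, h2, h3⟩ :=
    (hk.and ((hnear.filter_mono nhdsWithin_le_nhds).and self_mem_nhdsWithin)).exists
  have h3 : 0 < τ := h3
  rw [e] at h1
  have := hmax ⟨h2, h1⟩
  linarith

lemma isOpen_star {G : Set X} (hG : IsOpen G) (x : X) : IsOpen {y | segment ℝ x y ⊆ G} := by
  rw [isOpen_iff_mem_nhds]
  intro y hy
  have hy : segment ℝ x y ⊆ G := hy
  have : ∀ᶠ z in 𝓝 y, ∀ t ∈ Set.Icc (0:ℝ) 1, x + t • (z - x) ∈ G := by
    apply isCompact_Icc.eventually_forall_of_forall_eventually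
    intro t ht
    have hc : Continuous (fun p : X × ℝ => x + p.2 • (p.1 - x)) := by fun_prop
    refine hc.continuousAt.eventually (hG.mem_nhds (hy ?_))
    rw [segment_eq_image']; exact ⟨t, ht, rfl⟩
  filter_upwards [this] with z hz
  show segment ℝ x z ⊆ G
  rw [segment_eq_image']
  rintro _ ⟨t, ht, rfl⟩
  exact hz t ht

lemma isClosed_star {C : Set X} (hC : IsClosed C) (x : X) : IsClosed {y | segment ℝ x y ⊆ C} := by
  have : {y | segment ℝ x y ⊆ C} = ⋂ t ∈ Set.Icc (0:ℝ) 1, (fun y => x + t • (y - x)) ⁻¹' C := by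
    ext y
    simp only [Set.mem_ofPred_eq, Set.mem_iInter, Set.mem_preimage]
    rw [segment_eq_image']
    constructor
    · intro h t ht; exact h ⟨t, ht, rfl⟩
    · rintro h _ ⟨t, ht, rfl⟩; exact h t ht
  rw [this]
  exact isClosed_biInter fun t _ => hC.preimage (by fun_prop)

lemma local_conn {g : X → ℝ} {U : Set X} {p v : X} {r : ℝ} {L : NNReal}
    (hG : IsOpen {z ∈ U | g z < 0}) (hp : LocData g U p r L v) (hgp : g p = 0) {V : Set X}
    (hV : ∀ a b, segment ℝ a b ⊆ {z ∈ U | g z < 0} → a ∈ V → b ∈ V) :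
    ∃ N ∈ 𝓝 p, ∀ a ∈ N, ∀ b ∈ N, g a < 0 → g b < 0 → a ∈ V → b ∈ V := by
  set δ := r / (2 * (‖v‖ + 1)) with hδ
  have hr := hp.1
  have hδ0 : 0 < δ := by positivity
  have hδ1 : δ * ‖v‖ < r / 2 := by
    rw [hδ, div_mul_eq_mul_div, div_lt_div_iff₀ (by positivity) (by norm_num)]
    nlinarith [norm_nonneg v]
  have hb : ∀ a ∈ ball p (r / 2), ∀ s ∈ Set.Icc 0 δ, a - s • v ∈ ball p r := by
    intro a ha s hs
    rw [mem_ball_iff_norm] at ha ⊢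
    have : a - s • v - p = (a - p) - s • v := by abel
    rw [this]
    have h1 := norm_sub_le (a - p) (s • v)
    rw [norm_smul, Real.norm_eq_abs, abs_of_nonneg hs.1] at h1
    have h2 : s * ‖v‖ ≤ δ * ‖v‖ := by gcongr; exact hs.2
    linarith
  have hdec : ∀ a ∈ ball p (r / 2), ∀ s ∈ Set.Icc 0 δ, g (a - s • v) + s / 2 ≤ g a := by
    intro a ha s hs
    have := hp.mono (hb a ha s hs) hs.1 (by
      rw [sub_add_cancel]; exact ball_subset_ball (by linarith) ha)
    rwa [sub_add_cancel] at this
  have hpb : p ∈ ball p (r / 2) := mem_ball_self (by linarith)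
  have hδI : δ ∈ Set.Icc 0 δ := ⟨hδ0.le, le_rfl⟩
  have hpG : p - δ • v ∈ {z ∈ U | g z < 0} := by
    refine ⟨hp.2.1 (hb p hpb δ hδI), ?_⟩
    have := hdec p hpb δ hδI
    linarith
  obtain ⟨ρ, hρ, hρs⟩ := Metric.isOpen_iff.1 hG _ hpG
  have hvert : ∀ a ∈ ball p (r / 2), g a < 0 →
      segment ℝ a (a - δ • v) ⊆ {z ∈ U | g z < 0} := by
    intro a ha hga
    rw [segment_eq_image']
    rintro _ ⟨t, ht, rfl⟩
    have e : a + t • (a - δ • v - a) = a - (t * δ) • v := by module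
    have hI : t * δ ∈ Set.Icc 0 δ :=
      ⟨mul_nonneg ht.1 hδ0.le, by nlinarith [ht.2]⟩
    simp only
    rw [e]
    refine ⟨hp.2.1 (hb a ha _ hI), ?_⟩
    have := hdec a ha _ hI
    have := hI.1
    linarith
  have hsh : ∀ a ∈ ball p ρ, a - δ • v ∈ ball (p - δ • v) ρ := by
    intro a ha
    rw [mem_ball, dist_sub_right]; exact ha
  refine ⟨ball p (min ρ (r / 2)), ball_mem_nhds _ (lt_min hρ (by linarith)), ?_⟩
  intro a ha b hb' hga hgb haV
  have ha1 := ball_subset_ball (min_le_left ρ (r / 2)) ha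
  have ha2 := ball_subset_ball (min_le_right ρ (r / 2)) ha
  have hb1 := ball_subset_ball (min_le_left ρ (r / 2)) hb'
  have hb2 := ball_subset_ball (min_le_right ρ (r / 2)) hb'
  have s1 := hV _ _ (hvert a ha2 hga) haV
  have s2 := hV _ _ (((convex_ball _ _).segment_subset (hsh a ha1) (hsh b hb1)).trans hρs) s1
  exact hV _ _ (by rw [segment_symm]; exact hvert b hb2 hgb) s2

lemma convex_of_dini {g : X → ℝ} {U Ω : Set X} (hUo : IsOpen U) (hgc : ContinuousOn g U)
    (hgs : IsC11SubmersionOnZeroSet g U) (hΩ : Ω = {x ∈ U | g x ≤ 0})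
    (hcl : IsClosed Ω) (hconn : IsConnected Ω)
    (hdini : ∀ q ∈ U, g q = 0 → ∀ k, fderiv ℝ g q k = 0 → ∀ c > 0,
      ∃ᶠ t in 𝓝[>] (0:ℝ), -c < fderiv ℝ g (q + t • k) k / t) : Convex ℝ Ω := by
  set G := {z ∈ U | g z < 0} with hGdef
  have hG : IsOpen G := hgc.isOpen_inter_preimage hUo isOpen_Iio
  have hGΩ : G ⊆ Ω := by
    intro z hz; rw [hΩ]; exact ⟨hz.1, hz.2.le⟩
  have hclos : closure G = Ω := by
    apply Set.Subset.antisymm (closure_minimal hGΩ hcl)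
    intro p hp
    have hp' := hp
    rw [hΩ] at hp'
    rcases hp'.2.lt_or_eq with h0 | h0
    · exact subset_closure ⟨hp'.1, h0⟩
    · obtain ⟨r, L, v, hl⟩ := exists_locData hgs hp'.1 h0
      have h1 := hasDerivAt_line (g := g) (y := p) (w := -v) (t := 0)
        (by simpa using hl.differentiableAt (mem_ball_self hl.1))
      have h2 := neg_of_deriv h1 (by simpa using h0) (by simp [hl.2.2.2.2.1])
      have h3 : Tendsto (fun t : ℝ => p + t • (-v)) (𝓝[>] 0) (𝓝 p) :=
        (line_tendsto p (-v)).mono_left nhdsWithin_le_nhds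
      refine mem_closure_of_tendsto h3 ?_
      filter_upwards [h2, h3.eventually (hUo.mem_nhds hp'.1)] with t ht ht' using ⟨ht', ht⟩
  have hGconv : Convex ℝ G := by
    rw [convex_iff_segment_subset]
    intro x hx y hy
    set V := {y | segment ℝ x y ⊆ G} with hVdef
    have hVG : V ⊆ G := fun z hz => hz (right_mem_segment ℝ x z)
    have hVo : IsOpen V := isOpen_star hG x
    have hVc : IsClosed {y | segment ℝ x y ⊆ Ω} := isClosed_star hcl x
    have hxV : x ∈ V := by
      show segment ℝ x x ⊆ G
      rw [segment_same]; simpa using hx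
    have hpre : ∀ Q : Set X, IsPreconnected Q → Q ⊆ G → ∀ a ∈ Q, a ∈ V → Q ⊆ V := by
      intro Q hQ hQG a ha haV
      refine hQ.subset_left_of_subset_union hVo hVc.isOpen_compl ?_ ?_ ⟨a, ha, haV⟩
      · rw [Set.disjoint_compl_right_iff_subset]
        intro z hz
        exact Set.Subset.trans hz hGΩ
      · intro z hz
        by_cases hzz : segment ℝ x z ⊆ Ω
        · left
          exact seg_interior hgc hgs hΩ hdini hx.2 (hQG hz).2 hzz
        · right; exact hzz
    have hstep : ∀ a b, segment ℝ a b ⊆ G → a ∈ V → b ∈ V := fun a b hab ha =>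
      hpre _ (convex_segment a b).isPreconnected hab a (left_mem_segment ℝ a b) ha
        (right_mem_segment ℝ a b)
    by_contra hyV
    have hcover : Ω ⊆ closure V ∪ closure (G \ V) := by
      rw [← closure_union, Set.union_sdiff_cancel hVG, hclos]
    obtain ⟨p, hpΩ, hp1, hp2⟩ := isPreconnected_closed_iff.1 hconn.isPreconnected _ _
      isClosed_closure isClosed_closure hcover
      ⟨x, hGΩ hx, subset_closure hxV⟩ ⟨y, hGΩ hy, subset_closure ⟨hy, hyV⟩⟩
    have hloc : ∃ N ∈ 𝓝 p, ∀ a ∈ N, ∀ b ∈ N, g a < 0 → g b < 0 → a ∈ V → b ∈ V := by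
      have hp' := hpΩ
      rw [hΩ] at hp'
      rcases hp'.2.lt_or_eq with h0 | h0
      · obtain ⟨ρ, hρ, hρs⟩ := Metric.isOpen_iff.1 hG p ⟨hp'.1, h0⟩
        exact ⟨ball p ρ, ball_mem_nhds p hρ, fun a ha b hb _ _ haV =>
          hstep a b (((convex_ball _ _).segment_subset ha hb).trans hρs) haV⟩
      · obtain ⟨r, L, v, hl⟩ := exists_locData hgs hp'.1 h0
        exact local_conn hG hl h0 hstep
    obtain ⟨N, hN, hNV⟩ := hloc
    obtain ⟨a, haN, haV⟩ := mem_closure_iff_nhds.1 hp1 N hN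
    obtain ⟨b, hbN, hbG, hbV⟩ := mem_closure_iff_nhds.1 hp2 N hN
    exact hbV (hNV a haN b hbN (hVG haV).2 hbG.2 haV)
  rw [← hclos]
  exact hGconv.closure

lemma frontier_iff {g : X → ℝ} {U Ω : Set X} (hUo : IsOpen U) (hgc : ContinuousOn g U)
    (hgs : IsC11SubmersionOnZeroSet g U) (hΩ : Ω = {x ∈ U | g x ≤ 0})
    (hcl : IsClosed Ω) {x : X} : x ∈ frontier Ω ↔ x ∈ U ∧ g x = 0 := by
  rw [hcl.frontier_eq]
  constructor
  · rintro ⟨h1, h2⟩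
    rw [hΩ] at h1
    refine ⟨h1.1, by_contra fun hne => h2 ?_⟩
    have hG : IsOpen {z ∈ U | g z < 0} := hgc.isOpen_inter_preimage hUo isOpen_Iio
    refine interior_maximal (s := Ω) (t := {z ∈ U | g z < 0}) ?_ hG
      ⟨h1.1, lt_of_le_of_ne h1.2 hne⟩
    intro z hz; rw [hΩ]; exact ⟨hz.1, hz.2.le⟩
  · rintro ⟨h1, h2⟩
    refine ⟨by rw [hΩ]; exact ⟨h1, h2.le⟩, fun hint => ?_⟩
    obtain ⟨r, L, v, hl⟩ := exists_locData hgs h1 h2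
    have hev := (line_tendsto x v).eventually
      (Filter.inter_mem (mem_interior_iff_mem_nhds.1 hint) (ball_mem_nhds x hl.1))
    obtain ⟨s, ⟨hs1, hs2⟩, hs0⟩ :=
      ((hev.filter_mono (nhdsWithin_le_nhds (s := Set.Ioi 0))).and self_mem_nhdsWithin).exists
    have hs0 : 0 < s := hs0
    have := hl.mono (mem_ball_self hl.1) hs0.le hs2
    rw [hΩ] at hs1
    have := hs1.2
    linarith

end helpers

/-- Let `X` be a real Banach space, `U ⊆ X` open, `g : U → ℝ` continuous and a
`C^{1,1}`-submersion on its zero set, and suppose `Ω = {x ∈ U : g(x) ≤ 0}` is closed and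
connected.  Let `𝒟²` be any of the four generalized second-order directional derivative
operators.  Then `Ω` is convex iff `𝒟²g(x,h²) ≥ 0` for all `x ∈ ∂Ω` and all `h ∈ ker g'(x)`. -/
theorem stmt_2 {X : Type*} [NormedAddCommGroup X] [NormedSpace ℝ X] [CompleteSpace X]
    (U : Set X) (hUo : IsOpen U)
    (g : X → ℝ) (hgc : ContinuousOn g U) (hgs : IsC11SubmersionOnZeroSet g U)
    (Ω : Set X) (hΩ : Ω = {x ∈ U | g x ≤ 0})
    (hcl : IsClosed Ω) (hconn : IsConnected Ω)
    (D : (X → ℝ) → X → X → X → ℝ)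
    (hD : D = lowD2p ∨ D = upD2p ∨ D = lowD2m ∨ D = upD2m) :
    Convex ℝ Ω ↔ ∀ x ∈ frontier Ω, ∀ h : X, fderiv ℝ g x h = 0 → 0 ≤ D g x h h := by
  constructor
  · intro hc x hx h hh
    obtain ⟨hxU, hgx⟩ := (frontier_iff hUo hgc hgs hΩ hcl).1 hx
    obtain ⟨r, L, v, hl⟩ := exists_locData hgs hxU hgx
    exact red_nonneg hl hD (fun k hk c hc0 => conv_dir hUo hgc hΩ hc hl hgx hk hc0) hh
  · intro H
    refine convex_of_dini hUo hgc hgs hΩ hcl hconn ?_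
    intro q hqU hgq k hk c hc0
    obtain ⟨r, L, v, hl⟩ := exists_locData hgs hqU hgq
    exact red_freq hl hD (H q ((frontier_iff hUo hgc hgs hΩ hcl).2 ⟨hqU, hgq⟩)) hk hc0
end

section
/- Let X, Y be real Hilbert spaces, U ⊆ X and V ⊆ Y open, F : U → V a C^{1,1}-diffeomorphism, Ω ⊆ U a closed ball centered at x₀, and F(Ω) closed. Let 𝒟² be any one of the four generalized second-order directional derivative operators. Then F(Ω) is convex if and only if 𝒟²(y ↦ ⟨x−x₀, F'(x)⁻¹F(y)⟩)(x,h²) ≤ 1 for all x ∈ ∂Ω and all h ∈ X with h ⟂ (x−x₀) and ‖h‖ = 1. -/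
open Filter Topology Metric RealInnerProductSpace

/-- `F : U → V` is a `C^{1,1}`-diffeomorphism with inverse `G`. -/
def IsC11DiffeoOn {X Y : Type*} [NormedAddCommGroup X] [NormedSpace ℝ X]
    [NormedAddCommGroup Y] [NormedSpace ℝ Y]
    (F : X → Y) (G : Y → X) (U : Set X) (V : Set Y) : Prop :=
  Set.MapsTo F U V ∧ Set.MapsTo G V U ∧
    (∀ x ∈ U, G (F x) = x) ∧ (∀ y ∈ V, F (G y) = y) ∧
    ContDiffOn ℝ 1 F U ∧
    (∀ x ∈ U, ∃ ε > 0, ∃ L : NNReal,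
      LipschitzOnWith L (fun y => fderiv ℝ F y) (ball x ε ∩ U)) ∧
    ContDiffOn ℝ 1 G V ∧
    (∀ y ∈ V, ∃ ε > 0, ∃ L : NNReal,
      LipschitzOnWith L (fun z => fderiv ℝ G z) (ball y ε ∩ V))


open Asymptotics

section Helpers

variable {X Y : Type*} [NormedAddCommGroup X] [InnerProductSpace ℝ X]
  [NormedAddCommGroup Y] [InnerProductSpace ℝ Y]

lemma aux_bigO {ι : Type*} {l : Filter ι} (a : ι → X) (T : ι → Y →L[ℝ] X) (w : ι → Y) :
    (fun t => ⟪a t, T t (w t)⟫) =O[l] fun t => ‖a t‖ * (‖T t‖ * ‖w t‖) := by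
  refine IsBigO.of_bound 1 (Eventually.of_forall fun t => ?_)
  have h1 := norm_inner_le_norm (𝕜 := ℝ) (a t) (T t (w t))
  have h2 := (T t).le_opNorm (w t)
  have h3 : ‖a t‖ * ‖T t (w t)‖ ≤ ‖a t‖ * (‖T t‖ * ‖w t‖) := by gcongr
  rw [one_mul, Real.norm_of_nonneg (by positivity : 0 ≤ ‖a t‖ * (‖T t‖ * ‖w t‖))]
  exact h1.trans h3

lemma aux_apply_bigO {ι : Type*} {l : Filter ι} (w : ι → X →L[ℝ] Y) (k : X) :
    (fun t => w t k) =O[l] w := by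
  refine IsBigO.of_bound ‖k‖ (Eventually.of_forall fun t => ?_)
  rw [mul_comm]; exact (w t).le_opNorm k

/-- The derivative of `F` along two tangent curves differs by `o(t)`. -/
lemma aux_lip {F : X → Y} {x k : X} {γ : ℝ → X} {ε : ℝ} (hε : 0 < ε) {L : NNReal}
    (hL : LipschitzOnWith L (fun y => fderiv ℝ F y) (ball x ε))
    (hγ : HasDerivAt γ k 0) (hγ0 : γ 0 = x) :
    (fun t => fderiv ℝ F (γ t) - fderiv ℝ F (x + t • k)) =o[𝓝 0] (fun t : ℝ => t) ∧
    (fun t => fderiv ℝ F (γ t) - fderiv ℝ F x) =O[𝓝 0] (fun t : ℝ => t) := by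
  have hb : ∀ᶠ t in 𝓝 (0:ℝ), γ t ∈ ball x ε := by
    apply hγ.continuousAt
    rw [hγ0]; exact ball_mem_nhds x hε
  have hc : ContinuousAt (fun t : ℝ => x + t • k) 0 := by fun_prop
  have hb2 : ∀ᶠ t in 𝓝 (0:ℝ), x + t • k ∈ ball x ε := by
    apply hc
    simpa using ball_mem_nhds x hε
  have h1 : (fun t => γ t - (x + t • k)) =o[𝓝 0] (fun t : ℝ => t) := by
    have := (hasDerivAt_iff_isLittleO.1 hγ)
    simp only [sub_zero, hγ0] at this
    refine this.congr_left fun t => by abel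
  have h2 : (fun t => γ t - x) =O[𝓝 0] (fun t : ℝ => t) := by
    have := hγ.isBigO_sub
    simpa [hγ0] using this
  refine ⟨IsBigO.trans_isLittleO (IsBigO.of_bound L ?_) h1,
    IsBigO.trans (IsBigO.of_bound L ?_) h2⟩
  · filter_upwards [hb, hb2] with t h h'
    simpa [dist_eq_norm] using hL.dist_le_mul _ h _ h'
  · filter_upwards [hb] with t h
    simpa [dist_eq_norm] using hL.dist_le_mul _ h _ (mem_ball_self hε)

lemma aux_sub {γ : ℝ → X} {x k : X} (hγ : HasDerivAt γ k 0) (hγ0 : γ 0 = x) :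
    (fun t => γ t - (x + t • k)) =o[𝓝 0] (fun t : ℝ => t) ∧
    (fun t => γ t - x) =O[𝓝 0] (fun t : ℝ => t) := by
  constructor
  · have := (hasDerivAt_iff_isLittleO.1 hγ)
    simp only [sub_zero, hγ0] at this
    refine this.congr_left fun t => by abel
  · have := hγ.isBigO_sub
    simpa [hγ0] using this

/-- Key expansion. -/
lemma key_expansion {F : X → Y} {Fi : X → Y →L[ℝ] X} {x₀ x k : X} {γ : ℝ → X}
    {ε : ℝ} (hε : 0 < ε) {L : NNReal}
    (hL : LipschitzOnWith L (fun y => fderiv ℝ F y) (ball x ε))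
    (hFi : ContinuousAt Fi x)
    (hinv : ∀ᶠ y in 𝓝 x, (Fi y).comp (fderiv ℝ F y) = ContinuousLinearMap.id ℝ X)
    (hγ : HasDerivAt γ k 0) (hγ0 : γ 0 = x) (hk : ⟪x - x₀, k⟫ = 0) :
    (fun t => ⟪γ t - x₀, Fi (γ t) (fderiv ℝ F x k)⟫ -
      (t * ‖k‖ ^ 2 - ⟪x - x₀, Fi x (fderiv ℝ F (x + t • k) k)⟫))
      =o[𝓝 0] (fun t : ℝ => t) := by
  obtain ⟨hs1, hs2⟩ := aux_sub hγ hγ0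
  obtain ⟨hl1, hl2⟩ := aux_lip hε hL hγ hγ0
  have hγc : Tendsto γ (𝓝 0) (𝓝 x) := by
    have := hγ.continuousAt.tendsto; rwa [hγ0] at this
  have hBi : Tendsto (fun t => Fi (γ t)) (𝓝 0) (𝓝 (Fi x)) := hFi.tendsto.comp hγc
  have hBi1 : (fun t => Fi (γ t)) =O[𝓝 0] (fun _ : ℝ => (1:ℝ)) := hBi.isBigO_one ℝ
  have hBi2 : (fun t => Fi (γ t) - Fi x) =o[𝓝 0] (fun _ : ℝ => (1:ℝ)) := by
    rw [isLittleO_one_iff]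
    simpa using hBi.sub_const (Fi x)
  have hconst : ∀ c : X, (fun _ : ℝ => c) =O[𝓝 0] (fun _ : ℝ => (1:ℝ)) :=
    fun c => isBigO_const_const c one_ne_zero _
  have hconst2 : (fun _ : ℝ => Fi x) =O[𝓝 0] (fun _ : ℝ => (1:ℝ)) :=
    isBigO_const_const _ one_ne_zero _
  -- four terms
  have e1 : (fun t => ⟪γ t - (x + t • k), k⟫) =o[𝓝 0] (fun t : ℝ => t) := by
    refine IsBigO.trans_isLittleO (IsBigO.of_bound ‖k‖ (Eventually.of_forall fun t => ?_)) hs1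
    rw [mul_comm]; exact norm_inner_le_norm _ _
  have e2 : (fun t => ⟪x - x₀, Fi x
      ((fderiv ℝ F (γ t) - fderiv ℝ F (x + t • k)) k)⟫) =o[𝓝 0] (fun t : ℝ => t) := by
    refine (aux_bigO (fun _ => x - x₀) (fun _ => Fi x) _).trans_isLittleO ?_
    have := (hconst (x - x₀)).norm_left.mul_isLittleO (hconst2.norm_left.mul_isLittleO
      (((aux_apply_bigO _ k).trans_isLittleO hl1).norm_left))
    simpa using this
  have e3 : (fun t => ⟪x - x₀, (Fi (γ t) - Fi x)
      ((fderiv ℝ F (γ t) - fderiv ℝ F x) k)⟫) =o[𝓝 0] (fun t : ℝ => t) := by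
    refine (aux_bigO (fun _ => x - x₀) (fun t => Fi (γ t) - Fi x) _).trans_isLittleO ?_
    have := (hconst (x - x₀)).norm_left.mul_isLittleO (hBi2.norm_left.mul_isBigO
      (((aux_apply_bigO _ k).trans hl2).norm_left))
    simpa using this
  have ht1 : (fun t : ℝ => t) =o[𝓝 0] (fun _ : ℝ => (1:ℝ)) := by
    rw [isLittleO_one_iff]; exact tendsto_id
  have e4 : (fun t => ⟪γ t - x, Fi (γ t)
      ((fderiv ℝ F (γ t) - fderiv ℝ F x) k)⟫) =o[𝓝 0] (fun t : ℝ => t) := by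
    refine (aux_bigO (fun t => γ t - x) (fun t => Fi (γ t)) _).trans_isLittleO ?_
    have := (hs2.trans_isLittleO ht1).norm_left.mul_isBigO (hBi1.norm_left.mul
      (((aux_apply_bigO _ k).trans hl2).norm_left))
    simpa using this
  refine (((e1.sub e2).sub e3).sub e4).congr' ?_ EventuallyEq.rfl
  filter_upwards [hγc.eventually hinv] with t ht
  have i1 : Fi (γ t) (fderiv ℝ F (γ t) k) = k := by
    simpa using congrArg (fun T : X →L[ℝ] X => T k) ht
  have i2 : Fi x (fderiv ℝ F x k) = k := by
    simpa using congrArg (fun T : X →L[ℝ] X => T k) hinv.self_of_nhds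
  simp only [_root_.sub_apply, map_sub, inner_sub_left, inner_sub_right,
    inner_add_left, inner_smul_left, i1, i2, real_inner_self_eq_norm_sq] at hk ⊢
  simp only [conj_trivial]
  linarith

/-- Expansion for the monotonicity term. -/
lemma mono_expansion {F : X → Y} {Fi : X → Y →L[ℝ] X} {x₀ x k : X} {γ : ℝ → X}
    {ε : ℝ} (hε : 0 < ε) {L : NNReal}
    (hL : LipschitzOnWith L (fun y => fderiv ℝ F y) (ball x ε))
    (hFi : ContinuousAt Fi x) (hFd : DifferentiableAt ℝ F x)
    (hinv : ∀ᶠ y in 𝓝 x, (Fi y).comp (fderiv ℝ F y) = ContinuousLinearMap.id ℝ X)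
    (hinv2 : (fderiv ℝ F x).comp (Fi x) = ContinuousLinearMap.id ℝ Y)
    (hγ : HasDerivAt γ k 0) (hγ0 : γ 0 = x) (hk : ⟪x - x₀, k⟫ = 0) :
    (fun t => ⟪γ t - x₀, Fi (γ t) (F (γ t) - F x)⟫ - ⟪x - x₀, Fi x (F (γ t) - F x)⟫
      - t * ⟪γ t - x₀, Fi (γ t) (fderiv ℝ F x k)⟫) =o[𝓝 0] (fun t : ℝ => t * t) := by
  obtain ⟨hs1, hs2⟩ := aux_sub hγ hγ0
  obtain ⟨hl1, hl2⟩ := aux_lip hε hL hγ hγ0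
  have hγc : Tendsto γ (𝓝 0) (𝓝 x) := by
    have := hγ.continuousAt.tendsto; rwa [hγ0] at this
  have hBi : Tendsto (fun t => Fi (γ t)) (𝓝 0) (𝓝 (Fi x)) := hFi.tendsto.comp hγc
  have hBi1 : (fun t => Fi (γ t)) =O[𝓝 0] (fun _ : ℝ => (1:ℝ)) := hBi.isBigO_one ℝ
  have hBi2 : (fun t => Fi (γ t) - Fi x) =O[𝓝 0] (fun t : ℝ => t) := by
    have h1 : (fun t => Fi (γ t) - Fi x) =O[𝓝 0]
        (fun t => ‖Fi (γ t)‖ * ‖fderiv ℝ F (γ t) - fderiv ℝ F x‖) := by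
      refine IsBigO.of_bound ‖Fi x‖ ?_
      filter_upwards [hγc.eventually hinv] with t ht
      have : Fi (γ t) - Fi x =
          -((Fi (γ t)).comp ((fderiv ℝ F (γ t) - fderiv ℝ F x).comp (Fi x))) := by
        rw [ContinuousLinearMap.sub_comp, ContinuousLinearMap.comp_sub, hinv2,
          ← ContinuousLinearMap.comp_assoc, ht]
        simp
      rw [this, norm_neg, Real.norm_of_nonneg (by positivity)]
      refine (ContinuousLinearMap.opNorm_comp_le _ _).trans ?_
      have := ContinuousLinearMap.opNorm_comp_le (fderiv ℝ F (γ t) - fderiv ℝ F x) (Fi x)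
      calc _ ≤ ‖Fi (γ t)‖ * (‖fderiv ℝ F (γ t) - fderiv ℝ F x‖ * ‖Fi x‖) := by gcongr
        _ = _ := by ring
    refine h1.trans ?_
    simpa using hBi1.norm_left.mul hl2.norm_left
  have hp : HasDerivAt (fun t => F (γ t)) (fderiv ℝ F x k) 0 := by
    have := (hγ0 ▸ hFd.hasFDerivAt : HasFDerivAt F (fderiv ℝ F x) (γ 0)).comp_hasDerivAt 0 hγ
    exact this
  obtain ⟨hp1, -⟩ := aux_sub hp rfl
  rw [hγ0] at hp1
  have hconst : ∀ c : X, (fun _ : ℝ => c) =O[𝓝 0] (fun _ : ℝ => (1:ℝ)) :=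
    fun c => isBigO_const_const c one_ne_zero _
  have e1 : (fun t => ⟪x - x₀, (Fi (γ t) - Fi x)
      (F (γ t) - (F x + t • fderiv ℝ F x k))⟫) =o[𝓝 0] (fun t : ℝ => t * t) := by
    refine (aux_bigO (fun _ => x - x₀) (fun t => Fi (γ t) - Fi x) _).trans_isLittleO ?_
    have := (hconst (x - x₀)).norm_left.mul_isLittleO (hBi2.norm_left.mul_isLittleO hp1.norm_left)
    simpa using this
  have e2 : (fun t => ⟪γ t - x, Fi (γ t)
      (F (γ t) - (F x + t • fderiv ℝ F x k))⟫) =o[𝓝 0] (fun t : ℝ => t * t) := by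
    refine (aux_bigO (fun t => γ t - x) (fun t => Fi (γ t)) _).trans_isLittleO ?_
    have := hs2.norm_left.mul_isLittleO (hBi1.norm_left.mul_isLittleO hp1.norm_left)
    simpa using this
  refine (e1.add e2).congr_left fun t => ?_
  have i2 : Fi x (fderiv ℝ F x k) = k := by
    simpa using congrArg (fun T : X →L[ℝ] X => T k) hinv.self_of_nhds
  simp only [_root_.sub_apply, map_sub, map_add, map_smul, inner_sub_left,
    inner_sub_right, inner_add_right, inner_smul_right, i2] at hk ⊢
  linear_combination t * hk

end Helpers

section Main

set_option linter.unusedSectionVars false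

variable {X Y : Type*} [NormedAddCommGroup X] [InnerProductSpace ℝ X] [CompleteSpace X]
  [NormedAddCommGroup Y] [InnerProductSpace ℝ Y] [CompleteSpace Y]

/-- Consequences of the hypotheses used in the sequel. -/
structure Good (U : Set X) (V : Set Y) (F : X → Y) (G : Y → X) (Fi : X → Y →L[ℝ] X) : Prop where
  hU : IsOpen U
  hV : IsOpen V
  mF : ∀ x ∈ U, F x ∈ V
  mG : ∀ y ∈ V, G y ∈ U
  GF : ∀ x ∈ U, G (F x) = x
  FG : ∀ y ∈ V, F (G y) = y
  cF : ∀ x ∈ U, ContDiffAt ℝ 1 F x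
  cG : ∀ y ∈ V, ContDiffAt ℝ 1 G y
  lip : ∀ x ∈ U, ∃ ε > 0, ∃ L : NNReal, LipschitzOnWith L (fun y => fderiv ℝ F y) (ball x ε)
  inv1 : ∀ x ∈ U, (Fi x).comp (fderiv ℝ F x) = ContinuousLinearMap.id ℝ X
  inv2 : ∀ x ∈ U, (fderiv ℝ F x).comp (Fi x) = ContinuousLinearMap.id ℝ Y
  eqG : ∀ x ∈ U, fderiv ℝ G (F x) = Fi x
  cFi : ∀ x ∈ U, ContinuousAt Fi x

lemma good_of {U : Set X} {V : Set Y} (hUo : IsOpen U) (hVo : IsOpen V)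
    {F : X → Y} {G : Y → X} (hF : IsC11DiffeoOn F G U V) {Fi : X → Y →L[ℝ] X}
    (hFi : ∀ x ∈ U, (Fi x).comp (fderiv ℝ F x) = ContinuousLinearMap.id ℝ X ∧
      (fderiv ℝ F x).comp (Fi x) = ContinuousLinearMap.id ℝ Y) : Good U V F G Fi := by
  obtain ⟨m1, m2, gf, fg, c1, l1, c2, -⟩ := hF
  have cF : ∀ x ∈ U, ContDiffAt ℝ 1 F x := fun x hx => c1.contDiffAt (hUo.mem_nhds hx)
  have cG : ∀ x ∈ V, ContDiffAt ℝ 1 G x := fun x hx => c2.contDiffAt (hVo.mem_nhds hx)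
  have eqG : ∀ x ∈ U, fderiv ℝ G (F x) = Fi x := by
    intro x hx
    have h1 : HasFDerivAt (G ∘ F) ((fderiv ℝ G (F x)).comp (fderiv ℝ F x)) x :=
      ((cG _ (m1 hx)).differentiableAt one_ne_zero).hasFDerivAt.comp x
        ((cF x hx).differentiableAt one_ne_zero).hasFDerivAt
    have h2 : HasFDerivAt (G ∘ F) (ContinuousLinearMap.id ℝ X) x := by
      refine (hasFDerivAt_id x).congr_of_eventuallyEq ?_
      filter_upwards [hUo.mem_nhds hx] with y hy
      exact gf y hy
    have h3 := h1.unique h2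
    calc fderiv ℝ G (F x) = (fderiv ℝ G (F x)).comp ((fderiv ℝ F x).comp (Fi x)) := by
          rw [(hFi x hx).2]; simp
      _ = Fi x := by rw [← ContinuousLinearMap.comp_assoc, h3]; simp
  refine ⟨hUo, hVo, fun x hx => m1 hx, fun x hx => m2 hx, gf, fg, cF, cG, ?_,
    fun x hx => (hFi x hx).1, fun x hx => (hFi x hx).2, eqG, ?_⟩
  · intro x hx
    obtain ⟨ε, hε, L, hL⟩ := l1 x hx
    obtain ⟨ε', hε', hb⟩ := Metric.isOpen_iff.1 hUo x hx
    refine ⟨min ε ε', lt_min hε hε', L, hL.mono fun y hy => ⟨?_, hb ?_⟩⟩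
    · exact ball_subset_ball (min_le_left _ _) hy
    · exact ball_subset_ball (min_le_right _ _) hy
  · intro x hx
    have h1 : ContinuousAt (fun y => fderiv ℝ G (F y)) x := by
      have h2 : ContinuousAt (fderiv ℝ G) (F x) :=
        (cG _ (m1 hx)).continuousAt_fderiv one_ne_zero
      exact ContinuousAt.comp (f := F) h2 (cF x hx).continuousAt
    refine h1.congr ?_
    filter_upwards [hUo.mem_nhds hx] with y hy
    exact eqG y hy

variable {U : Set X} {V : Set Y} {F : X → Y} {G : Y → X} {Fi : X → Y →L[ℝ] X}

lemma hasFDerivAt_psi (hg : Good U V F G Fi) (x₀ : X) {p : Y} (hp : p ∈ V) :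
    HasFDerivAt (fun p => ‖G p - x₀‖ ^ 2 / 2)
      ((innerSL ℝ (G p - x₀)).comp (fderiv ℝ G p)) p := by
  have h1 := ((hg.cG p hp).differentiableAt one_ne_zero).hasFDerivAt
  have h2 := ((h1.sub_const x₀).norm_sq).mul_const (1/2 : ℝ)
  refine (h2.congr_fderiv ?_).congr_of_eventuallyEq ?_
  · ext w; simp
  · exact Eventually.of_forall fun q => by simp [div_eq_mul_inv]

/-- Supporting half space. -/
lemma support_of_convex (hg : Good U V F G Fi) {x₀ : X} {r : ℝ} (hΩ : closedBall x₀ r ⊆ U)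
    (hc : Convex ℝ (F '' closedBall x₀ r)) {x y : X} (hx : x ∈ sphere x₀ r)
    (hy : y ∈ closedBall x₀ r) : ⟪x - x₀, Fi x (F y - F x)⟫ ≤ 0 := by
  have hxU : x ∈ U := hΩ (sphere_subset_closedBall hx)
  have h1 := hasFDerivAt_psi hg x₀ (hg.mF x hxU)
  have hl : HasDerivAt (fun s : ℝ => F x + s • (F y - F x)) (F y - F x) 0 := by
    simpa using ((hasDerivAt_id (0:ℝ)).smul_const (F y - F x)).const_add (F x)
  have h2 : HasDerivAt (fun s : ℝ => ‖G (F x + s • (F y - F x)) - x₀‖ ^ 2 / 2)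
      (⟪x - x₀, Fi x (F y - F x)⟫) 0 := by
    have h1' : HasFDerivAt (fun p => ‖G p - x₀‖ ^ 2 / 2)
      ((innerSL ℝ (G (F x) - x₀)).comp (fderiv ℝ G (F x))) (F x + (0:ℝ) • (F y - F x)) := by
      simpa using h1
    have := h1'.comp_hasDerivAt (0:ℝ) hl
    simpa [hg.eqG x hxU, hg.GF x hxU, Function.comp_def, inner_sub_left] using this
  have h3 := h2.tendsto_slope_zero_right
  refine le_of_tendsto h3 ?_
  have : Set.Ioo (0:ℝ) 1 ∈ 𝓝[>] (0:ℝ) := Ioo_mem_nhdsGT one_pos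
  filter_upwards [this] with s hs
  have hmem : F x + s • (F y - F x) ∈ F '' closedBall x₀ r :=
    hc.add_smul_sub_mem ⟨x, sphere_subset_closedBall hx, rfl⟩ ⟨y, hy, rfl⟩ ⟨hs.1.le, hs.2.le⟩
  obtain ⟨z, hz, hz'⟩ := hmem
  have hzr : ‖z - x₀‖ ≤ r := by simpa [dist_eq_norm] using hz
  have hxr : ‖x - x₀‖ = r := by simpa [dist_eq_norm] using hx
  have : ‖z - x₀‖ ^ 2 ≤ r ^ 2 := by gcongr
  simp only [zero_add, zero_smul, add_zero, ← hz', hg.GF z (hΩ hz), hg.GF x hxU, hxr, smul_eq_mul]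
  have hs' : 0 < s⁻¹ := inv_pos.2 hs.1
  nlinarith

/-- The forward direction, pointwise. -/
lemma forward_bound (hg : Good U V F G Fi) {x₀ : X} {r : ℝ} (hr : 0 < r)
    (hΩ : closedBall x₀ r ⊆ U)
    (hc : Convex ℝ (F '' closedBall x₀ r)) {x h : X} (hx : x ∈ sphere x₀ r)
    (hh : ⟪x - x₀, h⟫ = 0) (hn : ‖h‖ = 1) {ε : ℝ} (hε : 0 < ε) :
    ∀ᶠ t in 𝓝[>] (0:ℝ), ⟪x - x₀, Fi x (fderiv ℝ F (x + t • h) h)⟫ ≤ t * (1 + ε) := by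
  have hxU : x ∈ U := hΩ (sphere_subset_closedBall hx)
  have hxr : ‖x - x₀‖ = r := by simpa [dist_eq_norm] using hx
  let γ : ℝ → X := fun t => x₀ + (Real.cos (t / r) • (x - x₀) + (r * Real.sin (t / r)) • h)
  have hγ0 : γ 0 = x := by simp [γ]
  have hγ : HasDerivAt γ h 0 := by
    have h0 : HasDerivAt (fun t : ℝ => t / r) (1 / r) 0 := (hasDerivAt_id (0:ℝ)).div_const r
    have h1 := (h0.cos).smul_const (x - x₀)
    have h2 := ((h0.sin).const_mul r).smul_const h
    have := (h1.add h2).const_add x₀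
    refine this.congr_deriv ?_
    simp [hr.ne']
  have hγs : ∀ t, γ t ∈ sphere x₀ r := by
    intro t
    rw [mem_sphere, dist_eq_norm]
    have : ‖γ t - x₀‖ ^ 2 = r ^ 2 := by
      simp only [γ, add_sub_cancel_left]
      rw [norm_add_sq_real, norm_smul, norm_smul, inner_smul_left, inner_smul_right, hh, hn, hxr]
      simp only [mul_pow, Real.norm_eq_abs, sq_abs]
      have := Real.sin_sq_add_cos_sq (t / r)
      simp only [mul_zero, one_pow, mul_one, add_zero]
      linear_combination r ^ 2 * this
    exact (sq_eq_sq₀ (norm_nonneg _) hr.le).1 this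
  obtain ⟨δ, hδ, L, hL⟩ := hg.lip x hxU
  have hinv : ∀ᶠ y in 𝓝 x, (Fi y).comp (fderiv ℝ F y) = ContinuousLinearMap.id ℝ X := by
    filter_upwards [hg.hU.mem_nhds hxU] with y hy using hg.inv1 y hy
  have k1 := key_expansion hδ hL (hg.cFi x hxU) hinv hγ hγ0 hh
  have k2 := mono_expansion hδ hL (hg.cFi x hxU) ((hg.cF x hxU).differentiableAt one_ne_zero)
    hinv (hg.inv2 x hxU) hγ hγ0 hh
  have b1 := (k1.bound (half_pos hε)).filter_mono (nhdsWithin_le_nhds (s := Set.Ioi (0:ℝ)))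
  have b2 := (k2.bound (half_pos hε)).filter_mono (nhdsWithin_le_nhds (s := Set.Ioi (0:ℝ)))
  filter_upwards [b1, b2, self_mem_nhdsWithin] with t h1 h2 ht
  have ht : 0 < t := ht
  have s1 := support_of_convex hg hΩ hc hx (sphere_subset_closedBall (hγs t))
  have s2 := support_of_convex hg hΩ hc (hγs t) (sphere_subset_closedBall hx)
  have s2' : 0 ≤ ⟪γ t - x₀, Fi (γ t) (F (γ t) - F x)⟫ := by
    rw [← neg_sub (F x), map_neg, inner_neg_right]; linarith
  rw [Real.norm_eq_abs, Real.norm_eq_abs, abs_of_pos ht, abs_le] at h1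
  rw [Real.norm_eq_abs, Real.norm_eq_abs, abs_of_pos (mul_pos ht ht), abs_le] at h2
  rw [hn] at h1
  have h3 : t * (-(ε / 2 * t)) ≤ t * ⟪γ t - x₀, Fi (γ t) (fderiv ℝ F x h)⟫ := by
    linarith [h2.2]
  have h4 := le_of_mul_le_mul_left h3 ht
  linarith [h1.2, h1.1]

/-- Dini derivative of the graph function. -/
lemma dini_bound (hg : Good U V F G Fi) {x₀ : X} {r : ℝ}
    (hyp : ∀ x ∈ sphere x₀ r, ∀ k : X, ⟪x - x₀, k⟫ = 0 → ∀ ε > 0, ∃ᶠ t in 𝓝[>] (0:ℝ),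
      ⟪x - x₀, Fi x (fderiv ℝ F (x + t • k) k)⟫ < t * (‖k‖ ^ 2 + ε))
    {β : ℝ → Y} {w : ℝ → ℝ} {v e : Y} {τ : ℝ}
    (hβ : ∀ᶠ s in 𝓝 τ, HasDerivAt β (v + w s • e) s) (hV : β τ ∈ V)
    (hψ : ∀ᶠ s in 𝓝 τ, ‖G (β s) - x₀‖ = r)
    (he : 0 < ⟪G (β τ) - x₀, fderiv ℝ G (β τ) e⟫) {ρ : ℝ} (hρ : 0 < ρ) :
    ∃ᶠ z in 𝓝[>] τ, slope w τ z < ρ := by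
  have hβc : ContinuousAt β τ := hβ.self_of_nhds.continuousAt
  have hVe : ∀ᶠ s in 𝓝 τ, β s ∈ V := hβc (hg.hV.mem_nhds hV)
  -- orthogonality along the curve
  have orth : ∀ᶠ s in 𝓝 τ, ⟪G (β s) - x₀, fderiv ℝ G (β s) (v + w s • e)⟫ = 0 := by
    filter_upwards [hβ, hVe, hψ.eventually_nhds] with s h1 h2 h3
    have d1 := (hasFDerivAt_psi hg x₀ h2).comp_hasDerivAt s h1
    have d2 : HasDerivAt ((fun p => ‖G p - x₀‖ ^ 2 / 2) ∘ β) 0 s := by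
      refine (hasDerivAt_const s (r ^ 2 / 2)).congr_of_eventuallyEq ?_
      filter_upwards [h3] with z hz
      simp [hz]
    simpa [inner_sub_left] using d1.unique d2
  set x := G (β τ) with hxdef
  have hxU : x ∈ U := hg.mG _ hV
  have hFx : F x = β τ := hg.FG _ hV
  have hxs : x ∈ sphere x₀ r := by
    rw [mem_sphere, dist_eq_norm]; exact hψ.self_of_nhds
  set b := v + w τ • e with hb
  set k := fderiv ℝ G (β τ) b with hk
  let γ : ℝ → X := fun t => G (β (τ + t))
  have hγ0 : γ 0 = x := by simp [γ, hxdef]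
  have hγ : HasDerivAt γ k 0 := by
    have d0 : HasDerivAt (fun t : ℝ => β (τ + t)) b 0 := by
      have : HasDerivAt β b (τ + 0) := by simpa using hβ.self_of_nhds
      exact this.comp_const_add τ 0
    have d1 : HasFDerivAt G (fderiv ℝ G (β τ)) (β (τ + 0)) := by
      simpa using ((hg.cG _ hV).differentiableAt one_ne_zero).hasFDerivAt
    exact d1.comp_hasDerivAt (0:ℝ) d0
  have hFib : k = Fi x b := by rw [hk, ← hFx, hg.eqG x hxU]
  have hAk : fderiv ℝ F x k = b := by
    rw [hFib]
    simpa using congrArg (fun T : Y →L[ℝ] Y => T b) (hg.inv2 x hxU)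
  have hkk : ⟪x - x₀, k⟫ = 0 := orth.self_of_nhds
  obtain ⟨δ, hδ, L, hL⟩ := hg.lip x hxU
  have hinv : ∀ᶠ y in 𝓝 x, (Fi y).comp (fderiv ℝ F y) = ContinuousLinearMap.id ℝ X := by
    filter_upwards [hg.hU.mem_nhds hxU] with y hy using hg.inv1 y hy
  have k1 := key_expansion hδ hL (hg.cFi x hxU) hinv hγ hγ0 hkk
  rw [hAk] at k1
  set m := ⟪x - x₀, fderiv ℝ G (β τ) e⟫ with hm
  set ε := ρ * m / 8 with hε
  have hεp : 0 < ε := by positivity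
  have hmt : ∀ᶠ s in 𝓝 τ, m / 2 < ⟪G (β s) - x₀, fderiv ℝ G (β s) e⟫ := by
    have c1 : ContinuousAt (fun s => G (β s)) τ :=
      ContinuousAt.comp (f := β) (hg.cG _ hV).continuousAt hβc
    have c2 : ContinuousAt (fun s => fderiv ℝ G (β s)) τ :=
      ContinuousAt.comp (f := β) ((hg.cG _ hV).continuousAt_fderiv one_ne_zero) hβc
    have c3 : ContinuousAt (fun s => ⟪G (β s) - x₀, fderiv ℝ G (β s) e⟫) τ :=
      (c1.sub continuousAt_const).inner (c2.clm_apply continuousAt_const)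
    exact c3.eventually (lt_mem_nhds (by show m / 2 < m; linarith))
  have hadd : Tendsto (fun t : ℝ => τ + t) (𝓝 0) (𝓝 τ) := by
    have : ContinuousAt (fun t : ℝ => τ + t) 0 := by fun_prop
    simpa using this.tendsto
  have hev : ∀ᶠ t in 𝓝[>] (0:ℝ), (⟪x - x₀, Fi x (fderiv ℝ F (x + t • k) k)⟫ < t * (‖k‖ ^ 2 + ε) →
      slope w τ (τ + t) < ρ) := by
    have b1 := (k1.bound hεp).filter_mono (nhdsWithin_le_nhds (s := Set.Ioi (0:ℝ)))
    have b2 := (hadd.eventually hmt).filter_mono (nhdsWithin_le_nhds (s := Set.Ioi (0:ℝ)))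
    have b3 := (hadd.eventually orth).filter_mono (nhdsWithin_le_nhds (s := Set.Ioi (0:ℝ)))
    have b4 := (hadd.eventually hVe).filter_mono (nhdsWithin_le_nhds (s := Set.Ioi (0:ℝ)))
    filter_upwards [b1, b2, b3, b4, self_mem_nhdsWithin] with t h1 h2 h3 h4 ht hq
    have ht : 0 < t := ht
    have hFi : Fi (γ t) = fderiv ℝ G (β (τ + t)) := by
      have := hg.eqG (γ t) (hg.mG _ h4)
      rw [← this, hg.FG _ h4]
    rw [hFi, Real.norm_eq_abs, Real.norm_eq_abs, abs_of_pos ht, abs_le] at h1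
    have h5 : v + w (τ + t) • e = b + (w (τ + t) - w τ) • e := by
      rw [hb, sub_smul]; abel
    rw [h5, map_add, map_smul, inner_add_right, inner_smul_right] at h3
    set M := ⟪G (β (τ + t)) - x₀, fderiv ℝ G (β (τ + t)) e⟫ with hM
    set N := ⟪G (β (τ + t)) - x₀, fderiv ℝ G (β (τ + t)) b⟫ with hN
    have h6 : -(2 * ε * t) < N := by
      have := h1.1
      nlinarith
    have h7 : (w (τ + t) - w τ) * M < 2 * ε * t := by linarith
    rw [slope_def_field, add_sub_cancel_left, div_lt_iff₀ ht]
    by_contra hcon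
    push Not at hcon
    have h8 : ρ * t * (m / 2) ≤ (w (τ + t) - w τ) * M := by
      apply mul_le_mul hcon h2.le (by positivity)
      exact le_trans (by positivity) hcon
    have : 0 < ρ * t * m := by positivity
    rw [hε] at h7
    nlinarith
  have hfr := (hyp x hxs k hkk ε hεp).mp hev
  have hmap : Tendsto (fun t : ℝ => τ + t) (𝓝[>] 0) (𝓝[>] τ) := by
    refine tendsto_nhdsWithin_iff.2 ⟨hadd.mono_left nhdsWithin_le_nhds, ?_⟩
    filter_upwards [self_mem_nhdsWithin] with t ht
    simpa using ht
  exact hmap.frequently hfr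

/-- Local lemma: a tangent line does not enter the open image for small positive times. -/
lemma local_tangent (hg : Good U V F G Fi) {x₀ : X} {r : ℝ} (hr : 0 < r)
    (hΩ : closedBall x₀ r ⊆ U)
    (hyp : ∀ x ∈ sphere x₀ r, ∀ k : X, ⟪x - x₀, k⟫ = 0 → ∀ ε > 0, ∃ᶠ t in 𝓝[>] (0:ℝ),
      ⟪x - x₀, Fi x (fderiv ℝ F (x + t • k) k)⟫ < t * (‖k‖ ^ 2 + ε))
    {x : X} (hx : x ∈ sphere x₀ r) {v : Y} (hv : ⟪x - x₀, Fi x v⟫ = 0) :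
    ∀ᶠ t in 𝓝[>] (0:ℝ), r ≤ ‖G (F x + t • v) - x₀‖ := by
  have hxU : x ∈ U := hΩ (sphere_subset_closedBall hx)
  have hxr : ‖x - x₀‖ = r := by simpa [dist_eq_norm] using hx
  set e : Y := fderiv ℝ F x (x - x₀) with he
  have hFie : Fi x e = x - x₀ := by
    exact congrArg (fun T : X →L[ℝ] X => T (x - x₀)) (hg.inv1 x hxU)
  let P : ℝ × ℝ → Y := fun z => F x + (z.1 • v + z.2 • e)
  have hPc : ContDiff ℝ 1 P := by
    unfold P; fun_prop
  have hP0 : P (0, 0) = F x := by simp [P]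
  have hPd : ∀ z, HasFDerivAt P
      ((ContinuousLinearMap.fst ℝ ℝ ℝ).smulRight v + (ContinuousLinearMap.snd ℝ ℝ ℝ).smulRight e)
      z := by
    intro z
    have h1 : HasFDerivAt (fun z : ℝ × ℝ => z.1 • v)
      ((ContinuousLinearMap.fst ℝ ℝ ℝ).smulRight v) z :=
      ((ContinuousLinearMap.fst ℝ ℝ ℝ).smulRight v).hasFDerivAt
    have h2 : HasFDerivAt (fun z : ℝ × ℝ => z.2 • e)
      ((ContinuousLinearMap.snd ℝ ℝ ℝ).smulRight e) z :=
      ((ContinuousLinearMap.snd ℝ ℝ ℝ).smulRight e).hasFDerivAt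
    exact (h1.add h2).const_add (F x)
  let H : ℝ × ℝ → ℝ := fun z => ‖G (P z) - x₀‖ ^ 2 / 2
  have hH : ContDiffAt ℝ 1 H (0, 0) := by
    have h1 : ContDiffAt ℝ 1 G (P (0, 0)) := by rw [hP0]; exact hg.cG _ (hg.mF x hxU)
    have h2 : ContDiffAt ℝ 1 (fun z => G (P z)) (0, 0) := h1.comp _ hPc.contDiffAt
    exact ((h2.sub contDiffAt_const).norm_sq ℝ).div_const 2
  have hHd : ∀ z, P z ∈ V → HasFDerivAt H
      (((innerSL ℝ (G (P z) - x₀)).comp (fderiv ℝ G (P z))).comp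
      ((ContinuousLinearMap.fst ℝ ℝ ℝ).smulRight v + (ContinuousLinearMap.snd ℝ ℝ ℝ).smulRight e))
      z := fun z hz => (hasFDerivAt_psi hg x₀ hz).comp z (hPd z)
  have hH0 := hHd (0, 0) (by rw [hP0]; exact hg.mF x hxU)
  have hHe : ∀ b : ℝ, fderiv ℝ H (0, 0) (0, b) = b * r ^ 2 := by
    intro b
    rw [hH0.fderiv]
    show ⟪G (P (0, 0)) - x₀, fderiv ℝ G (P (0, 0)) ((0:ℝ) • v + b • e)⟫ = b * r ^ 2
    rw [hP0, hg.GF x hxU, hg.eqG x hxU, zero_smul, zero_add, map_smul, hFie, inner_smul_right,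
      real_inner_self_eq_norm_sq, hxr]
  have hHv : ∀ b : ℝ, fderiv ℝ H (0, 0) (b, 0) = 0 := by
    intro b
    rw [hH0.fderiv]
    show ⟪G (P (0, 0)) - x₀, fderiv ℝ G (P (0, 0)) (b • v + (0:ℝ) • e)⟫ = 0
    rw [hP0, hg.GF x hxU, hg.eqG x hxU, zero_smul, add_zero, map_smul, inner_smul_right, hv,
      mul_zero]
  have hinvt : (fderiv ℝ H (0, 0) ∘L .inr ℝ ℝ ℝ).IsInvertible := by
    refine ⟨ContinuousLinearEquiv.unitsEquivAut ℝ (Units.mk0 (r ^ 2) (by positivity)), ?_⟩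
    ext
    simp [hHe]
  set u := hH.implicitFunction one_ne_zero hinvt with hu
  have hu0 : u 0 = 0 := hH.implicitFunction_apply_self one_ne_zero hinvt
  have huc : ContDiffAt ℝ 1 u 0 := hH.contDiffAt_implicitFunction one_ne_zero hinvt
  have huH : ∀ᶠ t in 𝓝 (0:ℝ), H (t, u t) = H (0, 0) :=
    hH.eventually_apply_implicitFunction one_ne_zero hinvt
  have hH00 : H (0, 0) = r ^ 2 / 2 := by simp [H, hP0, hg.GF x hxU, hxr]
  have hduc : ∀ᶠ t in 𝓝 (0:ℝ), ContDiffAt ℝ 1 u t := huc.eventually (by simp)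
  -- good neighbourhood in the plane
  have hnb : ∀ᶠ z in 𝓝 ((0:ℝ), (0:ℝ)), P z ∈ V ∧ 0 < ⟪G (P z) - x₀, fderiv ℝ G (P z) e⟫ := by
    have cP : ContinuousAt P (0, 0) := hPc.continuous.continuousAt
    have hV0 : P (0, 0) ∈ V := by rw [hP0]; exact hg.mF x hxU
    have c1 : ContinuousAt (fun s => G (P s)) (0, 0) :=
      ContinuousAt.comp (f := P) (hg.cG _ hV0).continuousAt cP
    have c2 : ContinuousAt (fun s => fderiv ℝ G (P s)) (0, 0) :=
      ContinuousAt.comp (f := P) ((hg.cG _ hV0).continuousAt_fderiv one_ne_zero) cP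
    have c3 : ContinuousAt (fun s => ⟪G (P s) - x₀, fderiv ℝ G (P s) e⟫) (0, 0) :=
      (c1.sub continuousAt_const).inner (c2.clm_apply continuousAt_const)
    refine (cP.eventually (hg.hV.mem_nhds hV0)).and (c3.eventually (lt_mem_nhds ?_))
    show 0 < ⟪G (P (0, 0)) - x₀, fderiv ℝ G (P (0, 0)) e⟫
    rw [hP0, hg.GF x hxU, hg.eqG x hxU, hFie, real_inner_self_eq_norm_sq, hxr]
    positivity
  obtain ⟨η, hη, hηb⟩ := Metric.eventually_nhds_iff.1 hnb
  have hsmall : ∀ᶠ t in 𝓝 (0:ℝ), |u t| < η := by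
    have : Tendsto u (𝓝 0) (𝓝 0) := by
      have := huc.continuousAt.tendsto; rwa [hu0] at this
    have h2 := this.eventually (Metric.ball_mem_nhds (0:ℝ) hη)
    filter_upwards [h2] with t ht
    simpa [mem_ball, Real.dist_eq] using ht
  obtain ⟨δ, hδ, hδb⟩ := Metric.eventually_nhds_iff.1 (huH.and (hduc.and hsmall))
  set δ' := min δ η / 2 with hδ'
  have hmin : 0 < min δ η := lt_min hδ hη
  have hδ'p : 0 < δ' := by positivity
  have hlt : ∀ t, |t| ≤ δ' → |t| < δ ∧ |t| < η := by
    intro t ht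
    have h1 := min_le_left δ η
    have h2 := min_le_right δ η
    constructor <;> linarith
  have hall : ∀ t, |t| < δ → H (t, u t) = H (0, 0) ∧ ContDiffAt ℝ 1 u t ∧ |u t| < η :=
    fun t ht => hδb (by simpa [Real.dist_eq] using ht)
  have hηb' : ∀ t s : ℝ, |t| < η → |s| < η → P (t, s) ∈ V ∧
      0 < ⟪G (P (t, s)) - x₀, fderiv ℝ G (P (t, s)) e⟫ := by
    intro t s ht hs
    apply hηb
    rw [Prod.dist_eq]
    simpa [Real.dist_eq] using ⟨ht, hs⟩
  have hder : ∀ t, |t| < δ → HasDerivAt u (deriv u t) t := fun t ht =>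
    ((hall t ht).2.1.differentiableAt one_ne_zero).hasDerivAt
  have hdc : ∀ t, |t| < δ → ContinuousAt (deriv u) t := by
    intro t ht
    have := ((hall t ht).2.1.continuousAt_fderiv one_ne_zero).clm_apply
      (continuousAt_const (y := (1:ℝ)))
    exact this
  have hopen : ∀ t, |t| < δ → ∀ᶠ s in 𝓝 t, |s| < δ := fun t ht =>
    (continuous_abs.continuousAt (x := t)).eventually (gt_mem_nhds ht)
  -- derivative at zero vanishes
  have hd0 : deriv u 0 = 0 := by
    have h1 : HasDerivAt (fun t => (t, u t)) ((1:ℝ), deriv u 0) 0 :=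
      (hasDerivAt_id (0:ℝ)).prodMk (hder 0 (by simpa using hδ))
    have h2 : HasFDerivAt H (fderiv ℝ H (0, 0)) ((0:ℝ), u 0) := by
      rw [hu0]; exact hH0.differentiableAt.hasFDerivAt
    have h3 := h2.comp_hasDerivAt (0:ℝ) h1
    have h4 : HasDerivAt (H ∘ fun t => (t, u t)) 0 0 := by
      refine (hasDerivAt_const (0:ℝ) (H (0,0))).congr_of_eventuallyEq ?_
      filter_upwards [huH] with t ht using ht
    have h5 := h3.unique h4
    have h6 : ((1:ℝ), deriv u 0) = ((1:ℝ), (0:ℝ)) + ((0:ℝ), deriv u 0) := by simp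
    rw [h6, map_add, hHv, hHe, zero_add] at h5
    rcases mul_eq_zero.1 h5 with h | h
    · exact h
    · exact absurd h (by positivity)
  -- derivative is nonpositive
  have hneg : ∀ ⦃t⦄, t ∈ Set.Icc 0 δ' → deriv u t ≤ 0 := by
    refine image_le_of_liminf_slope_right_le_deriv_boundary (f := deriv u) (B := fun _ => 0)
      (B' := fun _ => 0) ?_ hd0.le continuousOn_const (fun t _ => hasDerivWithinAt_const _ _ _) ?_
    · intro t ht
      exact (hdc t (hlt t (by rw [abs_of_nonneg ht.1]; exact ht.2)).1).continuousWithinAt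
    · intro t ht ρ hρ
      have htb := hlt t (by rw [abs_of_nonneg ht.1]; exact ht.2.le)
      have hg1 := hηb' t (u t) htb.2 (hall t htb.1).2.2
      refine dini_bound hg hyp (β := fun s => P (s, u s)) (v := v) (e := e) ?_ hg1.1 ?_ hg1.2 hρ
      · filter_upwards [hopen t htb.1] with s hs
        have h1 : HasDerivAt (fun t => (t, u t)) ((1:ℝ), deriv u s) s :=
          (hasDerivAt_id s).prodMk (hder s hs)
        have := (hPd (s, u s)).comp_hasDerivAt s h1
        simpa [Function.comp_def] using this
      · filter_upwards [hopen t htb.1] with s hs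
        have h1 := (hall s hs).1
        rw [hH00] at h1
        have h2 : ‖G (P (s, u s)) - x₀‖ ^ 2 = r ^ 2 := by
          have : ‖G (P (s, u s)) - x₀‖ ^ 2 / 2 = r ^ 2 / 2 := h1
          linarith
        exact (sq_eq_sq₀ (norm_nonneg _) hr.le).1 h2
  have hule : ∀ t ∈ Set.Icc 0 δ', u t ≤ 0 := by
    intro t ht
    have hanti : AntitoneOn u (Set.Icc 0 δ') := by
      apply antitoneOn_of_deriv_nonpos (convex_Icc _ _)
      · intro s hs
        exact (hder s (hlt s (by rw [abs_of_nonneg hs.1]; exact hs.2)).1).continuousAt.continuousWithinAt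
      · intro s hs
        rw [interior_Icc] at hs
        exact (hder s (hlt s (by rw [abs_of_nonneg hs.1.le]; exact hs.2.le)).1).differentiableAt.differentiableWithinAt
      · intro s hs
        rw [interior_Icc] at hs
        exact hneg ⟨hs.1.le, hs.2.le⟩
    have := hanti ⟨le_rfl, hδ'p.le⟩ ht ht.1
    rwa [hu0] at this
  filter_upwards [Ioo_mem_nhdsGT hδ'p] with t ht
  have htI : t ∈ Set.Icc 0 δ' := ⟨ht.1.le, ht.2.le⟩
  have htb := hlt t (by rw [abs_of_nonneg htI.1]; exact htI.2)
  have hut := hule t htI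
  have hutη := (hall t htb.1).2.2
  have hsd : ∀ s ∈ Set.Icc (u t) 0, HasDerivAt (fun s => H (t, s))
      ⟪G (P (t, s)) - x₀, fderiv ℝ G (P (t, s)) e⟫ s ∧
      0 < ⟪G (P (t, s)) - x₀, fderiv ℝ G (P (t, s)) e⟫ := by
    intro s hs
    have hsη : |s| < η := by
      rw [abs_lt] at hutη ⊢
      exact ⟨by linarith [hs.1], by linarith [hs.2]⟩
    have hq := hηb' t s htb.2 hsη
    refine ⟨?_, hq.2⟩
    have h1 : HasDerivAt (fun s : ℝ => (t, s)) ((0:ℝ), (1:ℝ)) s :=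
      (hasDerivAt_const s t).prodMk (hasDerivAt_id s)
    have := (hHd (t, s) hq.1).comp_hasDerivAt s h1
    simpa [Function.comp_def, inner_sub_left] using this
  have hmono : MonotoneOn (fun s => H (t, s)) (Set.Icc (u t) 0) := by
    apply monotoneOn_of_deriv_nonneg (convex_Icc _ _)
    · intro s hs
      exact (hsd s hs).1.continuousAt.continuousWithinAt
    · intro s hs
      exact (hsd s (interior_subset hs)).1.differentiableAt.differentiableWithinAt
    · intro s hs
      rw [(hsd s (interior_subset hs)).1.deriv]
      exact (hsd s (interior_subset hs)).2.le
  have hfin := hmono ⟨le_rfl, hut⟩ ⟨hut, le_rfl⟩ hut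
  simp only at hfin
  rw [(hall t htb.1).1, hH00] at hfin
  have h9 : H (t, 0) = ‖G (F x + t • v) - x₀‖ ^ 2 / 2 := by simp [H, P]
  rw [h9] at hfin
  have : r ^ 2 ≤ ‖G (F x + t • v) - x₀‖ ^ 2 := by linarith
  exact (sq_le_sq₀ hr.le (norm_nonneg _)).1 this


lemma convex_of_hyp (hg : Good U V F G Fi) {x₀ : X} {r : ℝ} (hr : 0 < r)
    (hΩ : closedBall x₀ r ⊆ U) (hcl : IsClosed (F '' closedBall x₀ r))
    (hyp : ∀ x ∈ sphere x₀ r, ∀ k : X, ⟪x - x₀, k⟫ = 0 → ∀ ε > 0, ∃ᶠ t in 𝓝[>] (0:ℝ),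
      ⟪x - x₀, Fi x (fderiv ℝ F (x + t • k) k)⟫ < t * (‖k‖ ^ 2 + ε)) :
    Convex ℝ (F '' closedBall x₀ r) := by
  set O : Set Y := F '' ball x₀ r with hO
  have hbU : ball x₀ r ⊆ U := ball_subset_closedBall.trans hΩ
  have hFc : ContinuousOn F U := fun x hx => (hg.cF x hx).continuousAt.continuousWithinAt
  have hGc : ContinuousOn G V := fun x hx => (hg.cG x hx).continuousAt.continuousWithinAt
  have hOeq : O = V ∩ G ⁻¹' ball x₀ r := by
    ext y
    constructor
    · rintro ⟨x, hx, rfl⟩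
      refine ⟨hg.mF x (hbU hx), ?_⟩
      rw [Set.mem_preimage, hg.GF x (hbU hx)]; exact hx
    · rintro ⟨hy, hy'⟩
      exact ⟨G y, hy', hg.FG y hy⟩
  have hOo : IsOpen O := by
    rw [hOeq]; exact hGc.isOpen_inter_preimage hg.hV isOpen_ball
  have hOS : O ⊆ F '' closedBall x₀ r := Set.image_mono ball_subset_closedBall
  have hScl : closure O = F '' closedBall x₀ r := by
    apply subset_antisymm
    · exact closure_minimal hOS hcl
    · rw [← closure_ball x₀ hr.ne']
      apply ContinuousOn.image_closure
      rw [closure_ball x₀ hr.ne']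
      exact hFc.mono hΩ
  rw [← hScl]
  apply Convex.closure
  -- touching lemma
  have touch : ∀ a ∈ O, ∀ b ∈ O, segment ℝ a b ⊆ F '' closedBall x₀ r → segment ℝ a b ⊆ O := by
    intro a ha b hb hseg
    by_contra hcon
    have hcs : ∀ t ∈ Set.Icc (0:ℝ) 1, a + t • (b - a) ∈ F '' closedBall x₀ r := by
      intro t ht
      apply hseg
      rw [segment_eq_image']
      exact ⟨t, ht, rfl⟩
    have hcc : Continuous (fun t : ℝ => a + t • (b - a)) := by fun_prop
    let Z : Set ℝ := Set.Icc 0 1 ∩ (fun t : ℝ => a + t • (b - a)) ⁻¹' Oᶜ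
    have hZc : IsCompact Z := isCompact_Icc.inter_right (hOo.isClosed_compl.preimage hcc)
    have hZn : Z.Nonempty := by
      obtain ⟨y, hy, hyO⟩ := Set.not_subset.1 hcon
      rw [segment_eq_image'] at hy
      obtain ⟨t, ht, rfl⟩ := hy
      exact ⟨t, ht, hyO⟩
    obtain ⟨τ, hτZ, hτ⟩ := hZc.exists_isGreatest hZn
    have h0 : τ ≠ 0 := by
      rintro rfl
      apply hτZ.2; simpa using ha
    have h1 : τ ≠ 1 := by
      rintro rfl
      apply hτZ.2; simpa using hb
    have hτ0 : 0 < τ := lt_of_le_of_ne hτZ.1.1 (Ne.symm h0)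
    have hτ1 : τ < 1 := lt_of_le_of_ne hτZ.1.2 h1
    obtain ⟨x, hx, hxe⟩ := hcs τ hτZ.1
    have hxU : x ∈ U := hΩ hx
    have hxs : x ∈ sphere x₀ r := by
      rw [mem_sphere]
      refine le_antisymm hx ?_
      by_contra hlt
      apply hτZ.2
      exact ⟨x, by rw [mem_ball]; exact not_le.1 hlt, hxe⟩
    have hxr : ‖x - x₀‖ = r := by simpa [dist_eq_norm] using hxs
    -- tangency
    have hv : ⟪x - x₀, Fi x (b - a)⟫ = 0 := by
      have hl : HasDerivAt (fun s : ℝ => F x + s • (b - a)) (b - a) 0 := by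
        simpa using ((hasDerivAt_id (0:ℝ)).smul_const (b - a)).const_add (F x)
      have h1 := hasFDerivAt_psi hg x₀ (hg.mF x hxU)
      have h2 : HasDerivAt (fun s : ℝ => ‖G (F x + s • (b - a)) - x₀‖ ^ 2 / 2)
          (⟪x - x₀, Fi x (b - a)⟫) 0 := by
        have h1' : HasFDerivAt (fun p => ‖G p - x₀‖ ^ 2 / 2)
          ((innerSL ℝ (G (F x) - x₀)).comp (fderiv ℝ G (F x))) (F x + (0:ℝ) • (b - a)) := by
          simpa using h1
        have := h1'.comp_hasDerivAt (0:ℝ) hl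
        simpa [hg.eqG x hxU, hg.GF x hxU, Function.comp_def, inner_sub_left] using this
      refine IsLocalMax.hasDerivAt_eq_zero ?_ h2
      have hnb : ∀ᶠ s in 𝓝 (0:ℝ), s ∈ Set.Ioo (-τ) (1 - τ) :=
        Ioo_mem_nhds (by linarith) (by linarith)
      filter_upwards [hnb] with s hs
      obtain ⟨z, hz, hze⟩ := hcs (τ + s) ⟨by linarith [hs.1], by linarith [hs.2]⟩
      have : F x + s • (b - a) = F z := by
        rw [hxe, hze, add_smul, add_assoc]
      have hzr : ‖z - x₀‖ ≤ r := by simpa [dist_eq_norm] using hz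
      rw [this, hg.GF z (hΩ hz), zero_smul, add_zero, hg.GF x hxU, hxr]
      gcongr
    have hloc := local_tangent hg hr hΩ hyp hxs hv
    have hI : Set.Ioo (0:ℝ) (1 - τ) ∈ 𝓝[>] (0:ℝ) := Ioo_mem_nhdsGT (by linarith)
    obtain ⟨t, ht1, ht2⟩ := (hloc.and hI).exists
    have hmem : τ + t ∈ Z := by
      refine ⟨⟨by linarith [ht2.1], by linarith [ht2.2]⟩, ?_⟩
      intro hin
      have : a + (τ + t) • (b - a) = F x + t • (b - a) := by
        rw [hxe, add_smul, add_assoc]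
      simp only [this, hOeq] at hin
      have h3 := hin.2
      rw [Set.mem_preimage, mem_ball, dist_eq_norm] at h3
      linarith
    have := hτ hmem
    linarith [ht2.1]
  have hpre : IsPreconnected O :=
    (convex_ball x₀ r).isPreconnected.image F (hFc.mono hbU)
  rw [convex_iff_segment_subset]
  intro a ha b hb
  let T : Set Y := {b | segment ℝ a b ⊆ O}
  have hTo : IsOpen T := by
    rw [isOpen_iff_mem_nhds]
    intro b hb
    have hcc : Continuous (fun z : Y × ℝ => a + z.2 • (z.1 - a)) := by fun_prop
    have hsub : ({b} : Set Y) ×ˢ Set.Icc (0:ℝ) 1 ⊆ (fun z : Y × ℝ => a + z.2 • (z.1 - a)) ⁻¹' O := by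
      rintro ⟨y, t⟩ ⟨hy, ht⟩
      obtain rfl : y = b := hy
      apply hb
      rw [segment_eq_image']
      exact ⟨t, ht, rfl⟩
    obtain ⟨u, w, hu, -, hbu, hw, huw⟩ :=
      generalized_tube_lemma isCompact_singleton isCompact_Icc (hOo.preimage hcc) hsub
    filter_upwards [hu.mem_nhds (hbu rfl)] with y hy
    show segment ℝ a y ⊆ O
    rw [segment_eq_image']
    rintro _ ⟨t, ht, rfl⟩
    exact huw (show (y, t) ∈ u ×ˢ w from ⟨hy, hw ht⟩)
  have hTsub : O ⊆ T := by
    refine hpre.subset_of_closure_inter_subset hTo ⟨a, ha, ?_⟩ ?_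
    · show segment ℝ a a ⊆ O
      rw [segment_same]; simpa using ha
    · rintro y ⟨hy, hyO⟩
      apply touch a ha y hyO
      rw [segment_eq_image']
      rintro _ ⟨t, ht, rfl⟩
      rw [← hScl]
      have hcc : Continuous (fun z : Y => a + t • (z - a)) := by fun_prop
      refine map_mem_closure (f := fun z : Y => a + t • (z - a)) hcc hy ?_
      intro z hz
      apply hz
      rw [segment_eq_image']
      exact ⟨t, ht, rfl⟩
  exact hTsub hb

/-- The quotient is eventually the explicit expression, and it is bounded. -/
lemma quotient_facts (hg : Good U V F G Fi) {x₀ x h : X} (hx : x ∈ U) (hh : ⟪x - x₀, h⟫ = 0) :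
    (∀ᶠ t in 𝓝[>] (0:ℝ),
      (fderiv ℝ (fun y => ⟪x - x₀, Fi x (F y)⟫) (x + t • h) h -
        fderiv ℝ (fun y => ⟪x - x₀, Fi x (F y)⟫) x h) / t =
      ⟪x - x₀, Fi x (fderiv ℝ F (x + t • h) h)⟫ / t) ∧
    ∃ C : ℝ, ∀ᶠ t in 𝓝[>] (0:ℝ), |⟪x - x₀, Fi x (fderiv ℝ F (x + t • h) h)⟫ / t| ≤ C := by
  have hfd : ∀ y ∈ U, fderiv ℝ (fun y => ⟪x - x₀, Fi x (F y)⟫) y h =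
      ⟪x - x₀, Fi x (fderiv ℝ F y h)⟫ := by
    intro y hy
    have h1 := ((hg.cF y hy).differentiableAt one_ne_zero).hasFDerivAt
    have h2 : HasFDerivAt (fun y => ⟪x - x₀, Fi x (F y)⟫)
        (((innerSL ℝ (x - x₀)).comp (Fi x)).comp (fderiv ℝ F y)) y :=
      ((innerSL ℝ (x - x₀)).comp (Fi x)).hasFDerivAt.comp y h1
    rw [h2.fderiv]; rfl
  have hi : Fi x (fderiv ℝ F x h) = h := by
    exact congrArg (fun T : X →L[ℝ] X => T h) (hg.inv1 x hx)
  have hc : ContinuousAt (fun t : ℝ => x + t • h) 0 := by fun_prop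
  have hev : ∀ᶠ t in 𝓝[>] (0:ℝ), x + t • h ∈ U := by
    refine (hc.eventually ?_).filter_mono nhdsWithin_le_nhds
    simpa using hg.hU.mem_nhds hx
  constructor
  · filter_upwards [hev] with t ht
    rw [hfd _ ht, hfd x hx, hi, hh, sub_zero]
  · obtain ⟨δ, hδ, L, hL⟩ := hg.lip x hx
    have hγ : HasDerivAt (fun t : ℝ => x + t • h) h 0 := by
      simpa using ((hasDerivAt_id (0:ℝ)).smul_const h).const_add x
    obtain ⟨-, hl2⟩ := aux_lip hδ hL hγ (by simp)
    have hO := (aux_bigO (fun _ => x - x₀) (fun _ => Fi x) (l := 𝓝 (0:ℝ))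
      (fun t : ℝ => (fderiv ℝ F (x + t • h) - fderiv ℝ F x) h))
    have hO2 : (fun t : ℝ => ‖x - x₀‖ * (‖Fi x‖ * ‖(fderiv ℝ F (x + t • h) - fderiv ℝ F x) h‖))
        =O[𝓝 0] (fun t : ℝ => t) :=
      ((((aux_apply_bigO _ h).trans hl2).norm_left).const_mul_left _).const_mul_left _
    obtain ⟨C, hC⟩ := (hO.trans hO2).bound
    refine ⟨C, ?_⟩
    filter_upwards [hC.filter_mono nhdsWithin_le_nhds, self_mem_nhdsWithin] with t h1 ht
    have ht : 0 < t := ht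
    rw [abs_div, abs_of_pos ht, div_le_iff₀ ht]
    rw [_root_.sub_apply, map_sub, hi, inner_sub_right, hh, sub_zero, Real.norm_eq_abs,
      Real.norm_eq_abs, abs_of_pos ht] at h1
    exact h1

lemma lowD2m_eq (f : X → ℝ) (x h : X) : lowD2m f x h h = lowD2p f x (-h) (-h) := by
  unfold lowD2m lowD2p
  have : 𝓝[<] (0:ℝ) = map Neg.neg (𝓝[>] (0:ℝ)) := by simp
  rw [this, ← liminf_comp]
  congr 1
  ext t
  simp only [Function.comp, map_neg, neg_smul, smul_neg]
  rw [div_neg, ← neg_div]; congr 1; ring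

lemma upD2m_eq (f : X → ℝ) (x h : X) : upD2m f x h h = upD2p f x (-h) (-h) := by
  unfold upD2m upD2p
  have : 𝓝[<] (0:ℝ) = map Neg.neg (𝓝[>] (0:ℝ)) := by simp
  rw [this, ← limsup_comp]
  congr 1
  ext t
  simp only [Function.comp, map_neg, neg_smul, smul_neg]
  rw [div_neg, ← neg_div]; congr 1; ring

lemma low_le_up (hg : Good U V F G Fi) {x₀ x h : X} (hx : x ∈ U) (hh : ⟪x - x₀, h⟫ = 0) :
    lowD2p (fun y => ⟪x - x₀, Fi x (F y)⟫) x h h ≤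
      upD2p (fun y => ⟪x - x₀, Fi x (F y)⟫) x h h := by
  obtain ⟨h1, C, hC⟩ := quotient_facts hg hx hh
  unfold lowD2p upD2p
  rw [liminf_congr h1, limsup_congr h1]
  apply liminf_le_limsup
  · exact isBoundedUnder_of_eventually_le (hC.mono fun t ht => (abs_le.1 ht).2)
  · exact isBoundedUnder_of_eventually_ge (hC.mono fun t ht => (abs_le.1 ht).1)

lemma up_le_of_convex (hg : Good U V F G Fi) {x₀ : X} {r : ℝ} (hr : 0 < r)
    (hΩ : closedBall x₀ r ⊆ U)
    (hc : Convex ℝ (F '' closedBall x₀ r)) {x h : X} (hx : x ∈ sphere x₀ r)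
    (hh : ⟪x - x₀, h⟫ = 0) (hn : ‖h‖ = 1) :
    upD2p (fun y => ⟪x - x₀, Fi x (F y)⟫) x h h ≤ 1 := by
  have hxU : x ∈ U := hΩ (sphere_subset_closedBall hx)
  obtain ⟨h1, C, hC⟩ := quotient_facts hg hxU hh
  unfold upD2p
  rw [limsup_congr h1]
  refine le_of_forall_pos_le_add fun ε hε => ?_
  refine limsup_le_of_le ?_ ?_
  · exact (isBoundedUnder_of_eventually_ge
      (hC.mono fun t ht => (abs_le.1 ht).1)).isCoboundedUnder_le
  · filter_upwards [forward_bound hg hr hΩ hc hx hh hn hε, self_mem_nhdsWithin] with t h2 ht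
    have ht : 0 < t := ht
    rw [div_le_iff₀ ht]; linarith

lemma hyp_of_low (hg : Good U V F G Fi) {x₀ : X} {r : ℝ}
    (hΩ : closedBall x₀ r ⊆ U) {x : X} (hx : x ∈ sphere x₀ r)
    (hlow : ∀ h : X, ⟪x - x₀, h⟫ = 0 → ‖h‖ = 1 →
      lowD2p (fun y => ⟪x - x₀, Fi x (F y)⟫) x h h ≤ 1)
    (k : X) (hk : ⟪x - x₀, k⟫ = 0) (ε : ℝ) (hε : 0 < ε) :
    ∃ᶠ t in 𝓝[>] (0:ℝ), ⟪x - x₀, Fi x (fderiv ℝ F (x + t • k) k)⟫ < t * (‖k‖ ^ 2 + ε) := by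
  have hxU : x ∈ U := hΩ (sphere_subset_closedBall hx)
  by_cases hk0 : k = 0
  · subst hk0
    refine Eventually.frequently ?_
    filter_upwards [self_mem_nhdsWithin] with t ht
    have ht : 0 < t := ht
    simp only [map_zero, inner_zero_right, norm_zero]
    positivity
  have hkn : 0 < ‖k‖ := norm_pos_iff.2 hk0
  set h := ‖k‖⁻¹ • k with hh
  have hkh : k = ‖k‖ • h := by rw [hh, smul_smul, mul_inv_cancel₀ hkn.ne', one_smul]
  have hn : ‖h‖ = 1 := by rw [hh, norm_smul, norm_inv, norm_norm, inv_mul_cancel₀ hkn.ne']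
  have horth : ⟪x - x₀, h⟫ = 0 := by rw [hh, inner_smul_right, hk, mul_zero]
  obtain ⟨h1, C, hC⟩ := quotient_facts hg hxU horth
  have hl := hlow h horth hn
  unfold lowD2p at hl
  rw [liminf_congr h1] at hl
  set ε' := ε / ‖k‖ ^ 2 with hε'
  have hε'p : 0 < ε' := by positivity
  have hfr : ∃ᶠ t in 𝓝[>] (0:ℝ), ⟪x - x₀, Fi x (fderiv ℝ F (x + t • h) h)⟫ / t < 1 + ε' := by
    intro hcon
    have hge : 1 + ε' ≤ liminf (fun t : ℝ => ⟪x - x₀, Fi x (fderiv ℝ F (x + t • h) h)⟫ / t)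
        (𝓝[>] (0:ℝ)) := by
      refine le_liminf_of_le ?_ (hcon.mono fun t ht => not_lt.1 ht)
      exact (isBoundedUnder_of_eventually_le
        (hC.mono fun t ht => (abs_le.1 ht).2)).isCoboundedUnder_ge
    linarith
  have hmap : Tendsto (fun s : ℝ => s / ‖k‖) (𝓝[>] 0) (𝓝[>] 0) := by
    refine tendsto_nhdsWithin_iff.2 ⟨?_, ?_⟩
    · have : ContinuousAt (fun s : ℝ => s / ‖k‖) 0 := by fun_prop
      have h2 := this.tendsto
      rw [zero_div] at h2
      exact h2.mono_left nhdsWithin_le_nhds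
    · filter_upwards [self_mem_nhdsWithin] with s hs
      exact div_pos hs hkn
  refine hmap.frequently ?_
  refine hfr.mp ?_
  filter_upwards [self_mem_nhdsWithin] with s hs hq
  have hs : 0 < s := hs
  rw [div_lt_iff₀ hs] at hq
  have e1 : (s / ‖k‖) • k = s • h := by rw [hh, smul_smul, div_eq_mul_inv]
  have e2 : ⟪x - x₀, Fi x (fderiv ℝ F (x + (s / ‖k‖) • k) k)⟫ =
      ‖k‖ * ⟪x - x₀, Fi x (fderiv ℝ F (x + s • h) h)⟫ := by
    rw [e1, ← inner_smul_right, ← map_smul, ← map_smul, ← hkh]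
  rw [e2]
  have e3 : s / ‖k‖ * (‖k‖ ^ 2 + ε) = ‖k‖ * ((1 + ε') * s) := by
    rw [hε']; field_simp
  rw [e3]
  gcongr

end Main

/-- Let `X, Y` be real Hilbert spaces, `U ⊆ X`, `V ⊆ Y` open,
`F : U → V` a `C^{1,1}`-diffeomorphism, `Ω ⊆ U` a closed ball centered at `x₀`, and `F(Ω)`
closed.  Let `𝒟²` be any of the four generalized second-order directional derivative
operators.  Then `F(Ω)` is convex iff `𝒟²(y ↦ ⟨x−x₀, F'(x)⁻¹F(y)⟩)(x,h²) ≤ 1` for all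
`x ∈ ∂Ω` and all unit `h ⟂ (x−x₀)`. -/
theorem stmt_4 {X Y : Type*} [NormedAddCommGroup X] [InnerProductSpace ℝ X] [CompleteSpace X]
    [NormedAddCommGroup Y] [InnerProductSpace ℝ Y] [CompleteSpace Y]
    (U : Set X) (V : Set Y) (hUo : IsOpen U) (hVo : IsOpen V)
    (F : X → Y) (G : Y → X) (hF : IsC11DiffeoOn F G U V)
    (x₀ : X) (r : ℝ) (hr : 0 < r) (hΩU : closedBall x₀ r ⊆ U)
    (hFΩcl : IsClosed (F '' closedBall x₀ r))
    (Finv' : X → Y →L[ℝ] X)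
    (hFinv' : ∀ x ∈ U, (Finv' x).comp (fderiv ℝ F x) = ContinuousLinearMap.id ℝ X ∧
      (fderiv ℝ F x).comp (Finv' x) = ContinuousLinearMap.id ℝ Y)
    (D : (X → ℝ) → X → X → X → ℝ)
    (hD : D = lowD2p ∨ D = upD2p ∨ D = lowD2m ∨ D = upD2m) :
    Convex ℝ (F '' closedBall x₀ r) ↔
      ∀ x ∈ sphere x₀ r, ∀ h : X, ⟪h, x - x₀⟫ = 0 → ‖h‖ = 1 →
        D (fun y => ⟪x - x₀, Finv' x (F y)⟫) x h h ≤ 1 := by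
  have hg : Good U V F G Finv' := good_of hUo hVo hF hFinv'
  have hup : Convex ℝ (F '' closedBall x₀ r) → ∀ x ∈ sphere x₀ r, ∀ h : X, ⟪h, x - x₀⟫ = 0 →
      ‖h‖ = 1 → upD2p (fun y => ⟪x - x₀, Finv' x (F y)⟫) x h h ≤ 1 := by
    intro hc x hx h hh hn
    rw [real_inner_comm] at hh
    exact up_le_of_convex hg hr hΩU hc hx hh hn
  have hlow : (∀ x ∈ sphere x₀ r, ∀ h : X, ⟪h, x - x₀⟫ = 0 →
      ‖h‖ = 1 → lowD2p (fun y => ⟪x - x₀, Finv' x (F y)⟫) x h h ≤ 1) →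
      Convex ℝ (F '' closedBall x₀ r) := by
    intro hl
    refine convex_of_hyp hg hr hΩU hFΩcl fun x hx k hk ε hε => ?_
    refine hyp_of_low hg hΩU hx (fun h hh hn => hl x hx h ?_ hn) k hk ε hε
    rw [real_inner_comm]; exact hh
  have hle : ∀ x ∈ sphere x₀ r, ∀ h : X, ⟪h, x - x₀⟫ = 0 →
      lowD2p (fun y => ⟪x - x₀, Finv' x (F y)⟫) x h h ≤
        upD2p (fun y => ⟪x - x₀, Finv' x (F y)⟫) x h h := by
    intro x hx h hh
    rw [real_inner_comm] at hh
    exact low_le_up hg (hΩU (sphere_subset_closedBall hx)) hh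
  have hneg : ∀ x h : X, ⟪h, x - x₀⟫ = 0 → ⟪-h, x - x₀⟫ = 0 := by
    intro x h hh
    rw [inner_neg_left, hh, neg_zero]
  rcases hD with rfl | rfl | rfl | rfl
  · exact ⟨fun hc x hx h hh hn => (hle x hx h hh).trans (hup hc x hx h hh hn), hlow⟩
  · exact ⟨hup, fun H => hlow fun x hx h hh hn => (hle x hx h hh).trans (H x hx h hh hn)⟩
  · constructor
    · intro hc x hx h hh hn
      rw [lowD2m_eq]
      have hn' : ‖-h‖ = 1 := by rw [norm_neg, hn]
      exact (hle x hx _ (hneg x h hh)).trans (hup hc x hx _ (hneg x h hh) hn')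
    · intro H
      refine hlow fun x hx h hh hn => ?_
      have := H x hx (-h) (hneg x h hh) (by rw [norm_neg, hn])
      rwa [lowD2m_eq, neg_neg] at this
  · constructor
    · intro hc x hx h hh hn
      rw [upD2m_eq]
      exact hup hc x hx _ (hneg x h hh) (by rw [norm_neg, hn])
    · intro H
      refine hlow fun x hx h hh hn => ?_
      have := H x hx (-h) (hneg x h hh) (by rw [norm_neg, hn])
      rw [upD2m_eq, neg_neg] at this
      exact (hle x hx h hh).trans this
end
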